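/- arXiv:0806.4139 — 2 statements merged into one kernel-verified Lean document; each statement's English description precedes it below -/
import Mathlib

section
/- Let u ∈ C²(ℝ²) with |∇_G u| ∈ L^∞(ℝ²) and v ∈ C¹(ℝ²) with v ≥ 0. Then for every R > 0, ∫_{B_R(0)} ( ⟨∇_G u, ∇_G v⟩ + v Δ_G u ) dx dy ≥ −R² ‖∇_G u‖_{L^∞(ℝ²)} ∫_{∂B_1(0)} v(RX, R²Y) dH¹(X,Y), where ∂B_1(0) = {(X,Y) ∈ ℝ² : X⁴ + 4Y² = 1} and H¹ is the 1-dimensional Hausdorff measure. -/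
open MeasureTheory

/-- The Euclidean plane (with the Euclidean metric, so that the `1`-dimensional Hausdorff
measure `μH[1]` below is the Euclidean one). -/
abbrev E2 := EuclideanSpace ℝ (Fin 2)

/-- Partial derivative in the `x`-direction. -/
noncomputable def epX (u : E2 → ℝ) (p : E2) : ℝ := fderiv ℝ u p (EuclideanSpace.single 0 1)

/-- Partial derivative in the `y`-direction. -/
noncomputable def epY (u : E2 → ℝ) (p : E2) : ℝ := fderiv ℝ u p (EuclideanSpace.single 1 1)

/-- Second partial derivative in `x`. -/
noncomputable def epXX (u : E2 → ℝ) (p : E2) : ℝ :=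
  fderiv ℝ (epX u) p (EuclideanSpace.single 0 1)

/-- Second partial derivative in `y`. -/
noncomputable def epYY (u : E2 → ℝ) (p : E2) : ℝ :=
  fderiv ℝ (epY u) p (EuclideanSpace.single 1 1)

/-- The Grushin Laplacian `Δ_G u = ∂_xx u + x² ∂_yy u`. -/
noncomputable def egLap (u : E2 → ℝ) (p : E2) : ℝ := epXX u p + (p 0) ^ 2 * epYY u p

/-- The squared length of the Grushin gradient: `|∇_G u|² = (∂_x u)² + x² (∂_y u)²`. -/
noncomputable def egGradSq (u : E2 → ℝ) (p : E2) : ℝ :=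
  (epX u p) ^ 2 + (p 0) ^ 2 * (epY u p) ^ 2

/-- The Grushin ball of radius `R` centered at the origin:
`{(x,y) : (x⁴ + 4y²)^(1/4) < R}`. -/
def egBall (R : ℝ) : Set E2 := {p | ((p 0) ^ 4 + 4 * (p 1) ^ 2) ^ ((1 : ℝ) / 4) < R}

/-- The unit Grushin sphere `∂B₁(0) = {(X,Y) : X⁴ + 4Y² = 1}`. -/
def egSphere : Set E2 := {p | (p 0) ^ 4 + 4 * (p 1) ^ 2 = 1}

/-- The anisotropic dilation `(X,Y) ↦ (RX, R²Y)`. -/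
noncomputable def egScale (R : ℝ) (q : E2) : E2 :=
  (WithLp.equiv 2 (Fin 2 → ℝ)).symm ![R * q 0, R ^ 2 * q 1]



open scoped NNReal ENNReal

lemma haus_anti {X Y : Type*} [MetricSpace X] [MeasurableSpace X] [BorelSpace X]
    [MetricSpace Y] [MeasurableSpace Y] [BorelSpace Y] (f : X → Y) (s : Set X) (a : ℝ≥0)
    (h : ∀ x ∈ s, ∀ y ∈ s, (a : ℝ) * dist x y ≤ dist (f x) (f y)) :
    (a : ℝ≥0∞) * μH[1] s ≤ μH[1] (f '' s) := by
  rcases eq_or_ne a 0 with rfl | ha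
  · simp
  have ha' : (0 : ℝ) < a := by exact_mod_cast pos_iff_ne_zero.2 ha
  rcases s.eq_empty_or_nonempty with rfl | ⟨x0, hx0⟩
  · simp
  have : Nonempty X := ⟨x0⟩
  have hinj : Set.InjOn f s := by
    intro x hx y hy hxy
    have := h x hx y hy
    rw [hxy, dist_self] at this
    have h2 : dist x y ≤ 0 := by
      by_contra hc
      push Not at hc
      have := mul_pos ha' hc
      linarith
    exact dist_le_zero.1 h2
  have hleft := hinj.leftInvOn_invFunOn
  have hlip : LipschitzOnWith a⁻¹ (Function.invFunOn f s) (f '' s) := by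
    apply LipschitzOnWith.of_dist_le_mul
    rintro _ ⟨x, hx, rfl⟩ _ ⟨y, hy, rfl⟩
    rw [hleft hx, hleft hy]
    push_cast
    rw [inv_mul_eq_div, le_div_iff₀ ha']
    linarith [h x hx y hy]
  have h1 := hlip.hausdorffMeasure_image_le (d := 1) zero_le_one
  rw [hleft.image_image] at h1
  simp only [ENNReal.rpow_one] at h1
  rw [ENNReal.coe_inv ha] at h1
  rw [← ENNReal.div_eq_inv_mul] at h1
  rw [mul_comm]
  exact (ENNReal.le_div_iff_mul_le (Or.inl (by exact_mod_cast ha)) (Or.inl ENNReal.coe_ne_top)).1 h1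

lemma e2_dist_sq (p q : E2) : dist p q ^ 2 = (p 0 - q 0) ^ 2 + (p 1 - q 1) ^ 2 := by
  rw [EuclideanSpace.dist_eq, Real.sq_sqrt (by positivity)]
  simp [Fin.sum_univ_two, Real.dist_eq, sq_abs]

lemma sphere_abs_le (p : E2) (hp : p ∈ egSphere) : |p 0| ≤ 1 ∧ |p 1| ≤ 1 := by
  have hp : p 0 ^ 4 + 4 * p 1 ^ 2 = 1 := hp
  constructor
  · have : (p 0 ^ 2) ^ 2 ≤ 1 := by nlinarith [sq_nonneg (p 1)]
    have : p 0 ^ 2 ≤ 1 := by nlinarith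
    exact abs_le_one_iff_mul_self_le_one.2 (by nlinarith)
  · have : 0 ≤ p 0 ^ 4 := by positivity
    exact abs_le_one_iff_mul_self_le_one.2 (by nlinarith)

lemma haus_finite_of (i j : Fin 2) (hij : (i = 0 ∧ j = 1) ∨ (i = 1 ∧ j = 0)) (s : Set E2)
    (hs : s ⊆ egSphere)
    (h : ∀ p ∈ s, ∀ q ∈ s, |p j - q j| ≤ 16 * |p i - q i|) : μH[1] s < ⊤ := by
  have h1 := haus_anti (fun p : E2 => p i) s (1 / 17) (by
    intro p hp q hq
    have h2 := h p hp q hq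
    have h3 := e2_dist_sq p q
    have h4 : dist p q ^ 2 ≤ (17 * |p i - q i|) ^ 2 := by
      have : dist p q ^ 2 = |p j - q j| ^ 2 + |p i - q i| ^ 2 := by
        rw [h3, sq_abs, sq_abs]
        rcases hij with ⟨rfl, rfl⟩ | ⟨rfl, rfl⟩ <;> ring
      rw [this]
      nlinarith [abs_nonneg (p j - q j), abs_nonneg (p i - q i)]
    have h5 := abs_le_of_sq_le_sq h4 (by positivity)
    rw [Real.dist_eq]
    push_cast
    have := abs_le.1 h5
    linarith [this.2, le_abs_self (dist p q)])
  have h2 : μH[1] ((fun p : E2 => p i) '' s) ≤ μH[1] (Set.Icc (-1 : ℝ) 1) := by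
    apply measure_mono
    rintro _ ⟨p, hp, rfl⟩
    have := sphere_abs_le p (hs hp)
    have h3 : |p i| ≤ 1 := by
      rcases hij with ⟨rfl, rfl⟩ | ⟨rfl, rfl⟩
      exacts [this.1, this.2]
    exact abs_le.1 h3
  rw [hausdorffMeasure_real, Real.volume_Icc] at h2
  have h3 := lt_of_le_of_lt (h1.trans (by rw [hausdorffMeasure_real]; exact h2)) ENNReal.ofReal_lt_top
  by_contra hc
  rw [not_lt_top_iff] at hc
  rw [hc] at h3
  rw [ENNReal.mul_top (by simp)] at h3
  exact lt_irrefl _ h3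

lemma sphere_finite : μH[1] egSphere < ⊤ := by
  have hcov : egSphere ⊆ (egSphere ∩ {p | 1 / 4 ≤ p 1}) ∪ (egSphere ∩ {p | p 1 ≤ -(1 / 4)}) ∪
      (egSphere ∩ {p | 1 / 2 ≤ p 0}) ∪ (egSphere ∩ {p | p 0 ≤ - (1 / 2)}) := by
    intro p hp
    have hp' : p 0 ^ 4 + 4 * p 1 ^ 2 = 1 := hp
    by_contra hc
    simp only [Set.mem_union, Set.mem_inter_iff, hp, true_and, Set.mem_ofPred_eq, not_or, not_le] at hc
    obtain ⟨⟨⟨h1, h2⟩, h3⟩, h4⟩ := hc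
    have h5 : p 1 ^ 2 < 1 / 16 := by nlinarith
    have h6 : p 0 ^ 2 < 1 / 4 := by nlinarith
    nlinarith [sq_nonneg (p 0)]
  have key1 : ∀ p ∈ egSphere, ∀ q ∈ egSphere, 1 / 2 ≤ |p 1 + q 1| →
      |p 1 - q 1| ≤ 16 * |p 0 - q 0| := by
    intro p hp q hq h
    have hp' : p 0 ^ 4 + 4 * p 1 ^ 2 = 1 := hp
    have hq' : q 0 ^ 4 + 4 * q 1 ^ 2 = 1 := hq
    have e : 4 * (|p 1 - q 1| * |p 1 + q 1|) = |p 0 - q 0| * |(p 0 + q 0) * (p 0 ^ 2 + q 0 ^ 2)| := by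
      rw [← abs_mul, ← abs_mul, ← abs_neg (_ * ((p 0 + q 0) * _)), ← abs_of_pos (by norm_num : (0:ℝ) < 4), ← abs_mul]
      congr 1
      linear_combination hp' - hq'
    have b : |(p 0 + q 0) * (p 0 ^ 2 + q 0 ^ 2)| ≤ 4 := by
      rw [abs_mul]
      have h1 := (sphere_abs_le p hp).1
      have h2 := (sphere_abs_le q hq).1
      have h3 : |p 0 + q 0| ≤ 2 := (abs_add_le _ _).trans (by linarith)
      have h4 : |p 0 ^ 2 + q 0 ^ 2| ≤ 2 := by
        rw [abs_of_nonneg (by positivity), ← sq_abs (p 0), ← sq_abs (q 0)]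
        nlinarith [abs_nonneg (p 0), abs_nonneg (q 0)]
      nlinarith [abs_nonneg (p 0 + q 0), abs_nonneg (p 0 ^ 2 + q 0 ^ 2)]
    nlinarith [abs_nonneg (p 0 - q 0), abs_nonneg (p 1 - q 1)]
  have key2 : ∀ p ∈ egSphere, ∀ q ∈ egSphere, 
      1 / 2 ≤ p 0 ^ 2 + q 0 ^ 2 → 1 ≤ |p 0 + q 0| →
      |p 0 - q 0| ≤ 16 * |p 1 - q 1| := by
    intro p hp q hq h h'
    have hp' : p 0 ^ 4 + 4 * p 1 ^ 2 = 1 := hp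
    have hq' : q 0 ^ 4 + 4 * q 1 ^ 2 = 1 := hq
    have e : 4 * (|p 1 - q 1| * |p 1 + q 1|) = |p 0 - q 0| * (|p 0 + q 0| * (p 0 ^ 2 + q 0 ^ 2)) := by
      rw [← abs_of_nonneg (by positivity : 0 ≤ p 0 ^ 2 + q 0 ^ 2)]
      rw [← abs_mul, ← abs_mul, ← abs_mul, ← abs_neg (_ * ((p 0 + q 0) * _)), ← abs_of_pos (by norm_num : (0:ℝ) < 4), ← abs_mul]
      congr 1
      linear_combination hp' - hq'
    have b : 1 / 2 ≤ |p 0 + q 0| * (p 0 ^ 2 + q 0 ^ 2) := by nlinarith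
    have h1 := (sphere_abs_le p hp).2
    have h2 := (sphere_abs_le q hq).2
    have h3 : |p 1 + q 1| ≤ 2 := (abs_add_le _ _).trans (by linarith)
    nlinarith [abs_nonneg (p 0 - q 0), abs_nonneg (p 1 - q 1)]
  refine lt_of_le_of_lt (measure_mono hcov) ?_
  refine measure_union_lt_top (measure_union_lt_top (measure_union_lt_top ?_ ?_) ?_) ?_
  · refine haus_finite_of 0 1 (by simp) _ Set.inter_subset_left ?_
    rintro p ⟨hp, hp1⟩ q ⟨hq, hq1⟩
    simp only [Set.mem_ofPred_eq] at hp1 hq1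
    exact key1 p hp q hq (le_abs.2 (Or.inl (by linarith)))
  · refine haus_finite_of 0 1 (by simp) _ Set.inter_subset_left ?_
    rintro p ⟨hp, hp1⟩ q ⟨hq, hq1⟩
    simp only [Set.mem_ofPred_eq] at hp1 hq1
    exact key1 p hp q hq (le_abs.2 (Or.inr (by linarith)))
  · refine haus_finite_of 1 0 (by simp) _ Set.inter_subset_left ?_
    rintro p ⟨hp, hp1⟩ q ⟨hq, hq1⟩
    simp only [Set.mem_ofPred_eq] at hp1 hq1
    exact key2 p hp q hq (by nlinarith) (le_abs.2 (Or.inl (by linarith)))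
  · refine haus_finite_of 1 0 (by simp) _ Set.inter_subset_left ?_
    rintro p ⟨hp, hp1⟩ q ⟨hq, hq1⟩
    simp only [Set.mem_ofPred_eq] at hp1 hq1
    exact key2 p hp q hq (by nlinarith) (le_abs.2 (Or.inr (by linarith)))

/-- The four arcs of the unit Grushin sphere. -/
noncomputable def gam (s t : ℝ) (θ : ℝ) : E2 := !₂[s * √(Real.cos θ), t * (Real.sin θ / 2)]

lemma gam_zero (s t θ : ℝ) : gam s t θ 0 = s * √(Real.cos θ) := by simp [gam]
lemma gam_one (s t θ : ℝ) : gam s t θ 1 = t * (Real.sin θ / 2) := by simp [gam]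

lemma e2_continuous {X : Type*} [TopologicalSpace X] {f g : X → ℝ} (hf : Continuous f)
    (hg : Continuous g) : Continuous (fun x => (!₂[f x, g x] : E2)) := by
  refine (PiLp.continuous_toLp 2 _).comp ?_
  refine continuous_pi fun i => ?_
  fin_cases i
  · simpa using hf
  · simpa using hg

lemma gam_continuous (s t : ℝ) : Continuous (gam s t) :=
  e2_continuous (by fun_prop) (by fun_prop)

lemma gam_mem (s t θ : ℝ) (hs : s ^ 2 = 1) (ht : t ^ 2 = 1) (hθ : 0 ≤ Real.cos θ) :
    gam s t θ ∈ egSphere := by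
  change gam s t θ 0 ^ 4 + 4 * gam s t θ 1 ^ 2 = 1
  rw [gam_zero, gam_one]
  have h1 := Real.sq_sqrt hθ
  have h2 := Real.sin_sq_add_cos_sq θ
  have : (s * √(Real.cos θ)) ^ 4 = (s ^ 2) ^ 2 * (√(Real.cos θ) ^ 2) ^ 2 := by ring
  rw [this, hs, h1]
  have : 4 * (t * (Real.sin θ / 2)) ^ 2 = t ^ 2 * Real.sin θ ^ 2 := by ring
  rw [this, ht]
  linarith

lemma gam_dist (s t a b : ℝ) (hs : s ^ 2 = 1) (ht : t ^ 2 = 1) (ha : 0 ≤ Real.cos a)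
    (hb : 0 ≤ Real.cos b) : |Real.sin ((a - b) / 2)| ≤ dist (gam s t a) (gam s t b) := by
  refine abs_le_of_sq_le_sq ?_ dist_nonneg
  rw [e2_dist_sq, gam_zero, gam_zero, gam_one, gam_one]
  have h1 := Real.sq_sqrt ha
  have h2 := Real.sq_sqrt hb
  have h3 := Real.sqrt_nonneg (Real.cos a)
  have h4 := Real.sqrt_nonneg (Real.cos b)
  have h5 : √(Real.cos a) ≤ 1 := Real.sqrt_le_one.2 (Real.cos_le_one a)
  have h6 : √(Real.cos b) ≤ 1 := Real.sqrt_le_one.2 (Real.cos_le_one b)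
  have e1 : (s * √(Real.cos a) - s * √(Real.cos b)) ^ 2 = (√(Real.cos a) - √(Real.cos b)) ^ 2 := by
    linear_combination (√(Real.cos a) - √(Real.cos b)) ^ 2 * hs
  have e2 : (t * (Real.sin a / 2) - t * (Real.sin b / 2)) ^ 2 = (Real.sin a - Real.sin b) ^ 2 / 4 := by
    linear_combination (Real.sin a - Real.sin b) ^ 2 / 4 * ht
  have e3 : (Real.cos a - Real.cos b) ^ 2 / 4 ≤ (√(Real.cos a) - √(Real.cos b)) ^ 2 := by
    have : Real.cos a - Real.cos b = (√(Real.cos a) - √(Real.cos b)) * (√(Real.cos a) + √(Real.cos b)) := by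
      linear_combination h2 - h1
    rw [this, mul_pow]
    have : (√(Real.cos a) + √(Real.cos b)) ^ 2 ≤ 4 := by nlinarith
    nlinarith [sq_nonneg (√(Real.cos a) - √(Real.cos b))]
  have e4 : Real.sin ((a - b) / 2) ^ 2 = (Real.cos a - Real.cos b) ^ 2 / 4 + (Real.sin a - Real.sin b) ^ 2 / 4 := by
    have h7 : Real.cos (a - b) = 1 - 2 * Real.sin ((a - b) / 2) ^ 2 := by
      have := Real.cos_two_mul ((a - b) / 2)
      rw [mul_div_cancel₀ _ (two_ne_zero)] at this
      rw [this, Real.cos_sq']; ring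
    have h8 := Real.cos_sub a b
    have h9 := Real.sin_sq_add_cos_sq a
    have h10 := Real.sin_sq_add_cos_sq b
    linear_combination (1/2) * h7 - (1/2) * h8 - h9 / 4 - h10 / 4
  rw [e1, e2, e4]
  linarith

lemma sin_lower (a : ℝ) (ha : 0 ≤ a) (ha1 : a < 1) (x : ℝ) (hx : |x| ≤ 1 - a) :
    a * |x| ≤ |Real.sin x| := by
  have key : ∀ y : ℝ, 0 < y → y ≤ 1 - a → a * y ≤ Real.sin y := by
    intro y hy hy1
    have h1 := Real.sin_gt_sub_cube hy
    have : y ^ 3 ≤ (1 - a) * y := by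
      have : y ^ 2 ≤ 1 - a := by nlinarith
      nlinarith
    nlinarith
  rcases lt_trichotomy x 0 with h | h | h
  · rw [abs_of_neg h] at *
    have := key (-x) (by linarith) hx
    rw [Real.sin_neg] at this
    exact this.trans (neg_le_abs _)
  · simp [h]
  · rw [abs_of_pos h] at *
    exact (key x h hx).trans (le_abs_self _)

lemma gam_cos_nonneg {θ : ℝ} (h : θ ∈ Set.Ioo 0 (Real.pi / 2)) : 0 < Real.cos θ :=
  Real.cos_pos_of_mem_Ioo ⟨by linarith [h.1, Real.pi_pos], h.2⟩

lemma gam_injOn (s t : ℝ) (hs : s ^ 2 = 1) (ht : t ^ 2 = 1) :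
    Set.InjOn (gam s t) (Set.Ioo 0 (Real.pi / 2)) := by
  intro a ha b hb hab
  have h := gam_dist s t a b hs ht (gam_cos_nonneg ha).le (gam_cos_nonneg hb).le
  rw [hab, dist_self] at h
  have h0 := abs_nonpos_iff.1 h
  have hp := Real.pi_pos
  have := (Real.sin_eq_zero_iff_of_lt_of_lt (by linarith [ha.1, hb.2]) (by linarith [ha.2, hb.1])).1 h0
  linarith

lemma gam_measure (s t : ℝ) (hs : s ^ 2 = 1) (ht : t ^ 2 = 1) (A : Set ℝ)
    (hA : MeasurableSet A) (hAI : A ⊆ Set.Ioo 0 (Real.pi / 2)) :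
    volume A ≤ 2 * μH[1] (gam s t '' A) := by
  refine ENNReal.le_of_forall_lt_one_mul_le fun a' ha' => ?_
  lift a' to ℝ≥0 using ha'.ne_top
  have ha1 : (a' : ℝ) < 1 := by exact_mod_cast ha'
  have ha0 : (0 : ℝ) ≤ a' := a'.2
  obtain ⟨n, hn⟩ := exists_nat_gt (1 / (1 - (a' : ℝ)))
  have hn0 : (0 : ℝ) < n := lt_trans (by apply one_div_pos.2; linarith) hn
  rw [div_lt_iff₀ (by linarith)] at hn
  let J : ℤ → Set ℝ := fun k => A ∩ {θ | ⌊(n : ℝ) * θ⌋ = k}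
  have hJm : ∀ k, MeasurableSet (J k) := fun k =>
    hA.inter ((Int.measurable_floor.comp (measurable_const.mul measurable_id)) (measurableSet_singleton k))
  have hJd : Pairwise (Function.onFun Disjoint J) := by
    intro i j hij
    refine Set.disjoint_left.2 ?_
    rintro x ⟨_, hx⟩ ⟨_, hy⟩
    exact hij (hx.symm.trans hy)
  have hJU : A = ⋃ k, J k := by
    ext x
    simp [J]
  have hinj := (gam_injOn s t hs ht).mono hAI
  have hJk : ∀ k, (a' : ℝ≥0∞) * volume (J k) ≤ 2 * μH[1] (gam s t '' J k) := by
    intro k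
    have h1 := haus_anti (gam s t) (J k) (a' / 2) (by
      rintro x ⟨hxA, hx⟩ y ⟨hyA, hy⟩
      have hxc := (gam_cos_nonneg (hAI hxA)).le
      have hyc := (gam_cos_nonneg (hAI hyA)).le
      refine le_trans ?_ (gam_dist s t x y hs ht hxc hyc)
      have hx : ⌊(n : ℝ) * x⌋ = k := hx
      have hy : ⌊(n : ℝ) * y⌋ = k := hy
      rw [Int.floor_eq_iff] at hx hy
      have h3 : |x - y| ≤ 1 - a' := by
        have : (n : ℝ) * |x - y| ≤ 1 := by
          rw [← abs_of_pos hn0, ← abs_mul, abs_le]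
          constructor <;> linarith
        by_contra hc
        push Not at hc
        nlinarith
      have h4 : |(x - y) / 2| = |x - y| / 2 := by rw [abs_div]; simp
      have := sin_lower a' ha0 ha1 ((x - y) / 2) (by rw [h4]; linarith [abs_nonneg (x - y)])
      rw [h4] at this
      rw [Real.dist_eq]
      push_cast
      linarith)
    rw [hausdorffMeasure_real] at h1
    calc (a' : ℝ≥0∞) * volume (J k) = 2 * (((a' / 2 : ℝ≥0) : ℝ≥0∞) * volume (J k)) := by
          rw [← mul_assoc]
          congr 1
          have : a' = 2 * (a' / 2) := by
            rw [mul_div_cancel₀ _ two_ne_zero]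
          conv_lhs => rw [this]
          push_cast
          rfl
      _ ≤ _ := by gcongr
  have himg : μH[1] (gam s t '' A) = ∑' k, μH[1] (gam s t '' J k) := by
    conv_lhs => rw [hJU, Set.image_iUnion]
    refine measure_iUnion ?_ ?_
    · intro i j hij
      exact (hJd hij).image hinj Set.inter_subset_left Set.inter_subset_left
    · intro k
      exact (hJm k).image_of_continuousOn_injOn (gam_continuous s t).continuousOn (hinj.mono Set.inter_subset_left)
  rw [himg]
  conv_lhs => rw [hJU, measure_iUnion hJd hJm]
  rw [← ENNReal.tsum_mul_left, ← ENNReal.tsum_mul_left]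
  exact ENNReal.tsum_le_tsum hJk

/-- A sign attached to a Boolean. -/
def sgnB (b : Bool) : ℝ := if b then 1 else -1

lemma sgnB_sq (b : Bool) : sgnB b ^ 2 = 1 := by cases b <;> simp [sgnB]

lemma gam_map_le (s t : ℝ) (hs : s ^ 2 = 1) (ht : t ^ 2 = 1) :
    Measure.map (gam s t) (volume.restrict (Set.Ioo 0 (Real.pi / 2))) ≤
      (2 : ℝ≥0∞) • (μH[1] : Measure E2).restrict (gam s t '' Set.Ioo 0 (Real.pi / 2)) := by
  have hm := (gam_continuous s t).measurable
  refine Measure.le_iff.2 fun B hB => ?_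
  rw [Measure.map_apply hm hB, Measure.restrict_apply (hm hB), Measure.smul_apply,
    Measure.restrict_apply hB, smul_eq_mul]
  refine (gam_measure s t hs ht _ ((hm hB).inter measurableSet_Ioo) Set.inter_subset_right).trans ?_
  gcongr
  rintro _ ⟨x, ⟨hx1, hx2⟩, rfl⟩
  exact ⟨hx1, x, hx2, rfl⟩

lemma sphere_compact : IsCompact egSphere := by
  refine Metric.isCompact_of_isClosed_isBounded ?_ ?_
  · exact isClosed_eq (by fun_prop) (by fun_prop)
  · refine (Metric.isBounded_iff_subset_closedBall (0 : E2)).2 ⟨2, fun p hp => ?_⟩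
    obtain ⟨h1, h2⟩ := sphere_abs_le p hp
    rw [Metric.mem_closedBall]
    refine abs_le_of_sq_le_sq ?_ (by norm_num) |> (le_abs_self _).trans
    rw [e2_dist_sq]
    simp only [PiLp.zero_apply, sub_zero]
    rw [← sq_abs (p 0), ← sq_abs (p 1)]
    nlinarith [abs_nonneg (p 0), abs_nonneg (p 1)]

lemma sphere_integrable (f : E2 → ℝ) (hf : Continuous f) : IntegrableOn f egSphere μH[1] := by
  obtain ⟨C, hC⟩ := sphere_compact.exists_bound_of_continuousOn hf.continuousOn
  exact IntegrableOn.of_bound sphere_finite hf.aestronglyMeasurable C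
    ((ae_restrict_iff' sphere_compact.measurableSet).2 (Filter.Eventually.of_forall hC))

lemma arc_lower (f : E2 → ℝ) (hf : Continuous f) (hpos : ∀ p, 0 ≤ f p) (s t : ℝ)
    (hs : s ^ 2 = 1) (ht : t ^ 2 = 1) :
    ∫ θ in Set.Ioo 0 (Real.pi / 2), f (gam s t θ) ≤
      2 * ∫ q in gam s t '' Set.Ioo 0 (Real.pi / 2), f q ∂μH[1] := by
  have hm := (gam_continuous s t).measurable
  have hsub : gam s t '' Set.Ioo 0 (Real.pi / 2) ⊆ egSphere := by
    rintro _ ⟨θ, hθ, rfl⟩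
    exact gam_mem s t θ hs ht (gam_cos_nonneg hθ).le
  rw [← integral_map hm.aemeasurable hf.aestronglyMeasurable]
  have h2 : 2 * ∫ q in gam s t '' Set.Ioo 0 (Real.pi / 2), f q ∂μH[1] =
      ∫ q, f q ∂((2 : ℝ≥0∞) • (μH[1] : Measure E2).restrict (gam s t '' Set.Ioo 0 (Real.pi / 2))) := by
    rw [integral_smul_measure]; simp
  rw [h2]
  refine integral_mono_measure (gam_map_le s t hs ht) (Filter.Eventually.of_forall hpos) ?_
  exact Integrable.smul_measure ((sphere_integrable f hf).mono_set hsub) (by simp)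

lemma sphere_lower (f : E2 → ℝ) (hf : Continuous f) (hpos : ∀ p, 0 ≤ f p) :
    ∑ b : Bool × Bool, ∫ θ in Set.Ioo 0 (Real.pi / 2), f (gam (sgnB b.1) (sgnB b.2) θ) ≤
      2 * ∫ q in egSphere, f q ∂μH[1] := by
  have h1 := Finset.sum_le_sum (s := Finset.univ) fun (b : Bool × Bool) _ =>
    arc_lower f hf hpos (sgnB b.1) (sgnB b.2) (sgnB_sq _) (sgnB_sq _)
  refine h1.trans ?_
  rw [← Finset.mul_sum]
  have hsub : ∀ b : Bool × Bool, gam (sgnB b.1) (sgnB b.2) '' Set.Ioo 0 (Real.pi / 2) ⊆ egSphere := by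
    rintro b _ ⟨θ, hθ, rfl⟩
    exact gam_mem _ _ θ (sgnB_sq _) (sgnB_sq _) (gam_cos_nonneg hθ).le
  rw [← integral_iUnion_fintype]
  · refine mul_le_mul_of_nonneg_left ?_ zero_le_two
    refine setIntegral_mono_set (sphere_integrable f hf) (Filter.Eventually.of_forall hpos) ?_
    exact (Set.iUnion_subset hsub).eventuallyLE
  · intro b
    exact measurableSet_Ioo.image_of_continuousOn_injOn (gam_continuous _ _).continuousOn
      (gam_injOn _ _ (sgnB_sq _) (sgnB_sq _))
  · intro b c hbc
    refine Set.disjoint_left.2 ?_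
    rintro _ ⟨x, hx, rfl⟩ ⟨y, hy, hxy⟩
    apply hbc
    have e0 : sgnB c.1 * √(Real.cos y) = sgnB b.1 * √(Real.cos x) := by
      rw [← gam_zero _ (sgnB c.2), hxy, gam_zero]
    have e1 : sgnB c.2 * (Real.sin y / 2) = sgnB b.2 * (Real.sin x / 2) := by
      rw [← gam_one (sgnB c.1), hxy, gam_one]
    have c1 := Real.sqrt_pos.2 (gam_cos_nonneg hx)
    have c2 := Real.sqrt_pos.2 (gam_cos_nonneg hy)
    have hp := Real.pi_pos
    have s1 := Real.sin_pos_of_pos_of_lt_pi hx.1 (by linarith [hx.2])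
    have s2 := Real.sin_pos_of_pos_of_lt_pi hy.1 (by linarith [hy.2])
    rcases b with ⟨b1, b2⟩
    rcases c with ⟨c1, c2⟩
    have k0 : b1 = c1 := by
      cases b1 <;> cases c1 <;> simp [sgnB] at e0 ⊢ <;> linarith
    have k1 : b2 = c2 := by
      cases b2 <;> cases c2 <;> simp [sgnB] at e1 ⊢ <;> linarith
    rw [k0, k1]
  · intro b
    exact (sphere_integrable f hf).mono_set (hsub b)

lemma region_int (c : ℝ) (g : ℝ → ℝ) (hg : Continuous g) (hg0 : ∀ x, 0 ≤ g x)
    (D D' : ℝ → ℝ → ℝ) (hD : ∀ x y, HasDerivAt (D x) (D' x y) y)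
    (hD' : Continuous (Function.uncurry D')) :
    ∫ z in regionBetween (fun x => - g x) g (Set.Ioo (-c) c), D' z.1 z.2 =
      ∫ x in Set.Ioo (-c) c, (D x (g x) - D x (- g x)) := by
  have hmeas : MeasurableSet (regionBetween (fun x => - g x) g (Set.Ioo (-c) c)) :=
    measurableSet_regionBetween hg.neg.measurable hg.measurable measurableSet_Ioo
  have hD'' : Continuous fun z : ℝ × ℝ => D' z.1 z.2 := hD'
  obtain ⟨M, hM⟩ := (isCompact_Icc (a := -c) (b := c)).exists_bound_of_continuousOn hg.continuousOn
  have hInteg : IntegrableOn (fun z : ℝ × ℝ => D' z.1 z.2)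
      (regionBetween (fun x => - g x) g (Set.Ioo (-c) c)) := by
    refine (hD''.continuousOn.integrableOn_compact
      ((isCompact_Icc (a := -c) (b := c)).prod (isCompact_Icc (a := -M) (b := M)))).mono_set ?_
    rintro ⟨x, y⟩ ⟨hx, hy⟩
    have hx' : x ∈ Set.Icc (-c) c := Set.Ioo_subset_Icc_self hx
    have := (le_abs_self _).trans (hM x hx')
    simp only [Set.mem_Ioo] at hy
    exact ⟨hx', by constructor <;> simp only <;> linarith⟩
  rw [← integral_indicator hmeas, ← integral_indicator measurableSet_Ioo, Measure.volume_eq_prod,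
    integral_prod _ (by rw [← Measure.volume_eq_prod]; exact hInteg.integrable_indicator hmeas)]
  refine integral_congr_ae (Filter.Eventually.of_forall fun x => ?_)
  by_cases hx : x ∈ Set.Ioo (-c) c
  · simp only [Set.indicator_of_mem hx]
    have : (fun y => (regionBetween (fun x => - g x) g (Set.Ioo (-c) c)).indicator
        (fun z : ℝ × ℝ => D' z.1 z.2) (x, y)) = (Set.Ioo (- g x) (g x)).indicator (D' x) := by
      funext y
      by_cases hy : y ∈ Set.Ioo (- g x) (g x)
      · rw [Set.indicator_of_mem hy, Set.indicator_of_mem]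
        exact ⟨hx, hy⟩
      · rw [Set.indicator_of_notMem hy, Set.indicator_of_notMem]
        exact fun h => hy h.2
    rw [this, integral_indicator measurableSet_Ioo, ← integral_Ioc_eq_integral_Ioo,
      ← intervalIntegral.integral_of_le (by linarith [hg0 x])]
    refine intervalIntegral.integral_eq_sub_of_hasDerivAt (fun y _ => hD x y) ?_
    exact (hD'.comp (by fun_prop : Continuous fun y : ℝ => (x, y))).intervalIntegrable _ _
  · simp only [Set.indicator_of_notMem hx]
    have : (fun y => (regionBetween (fun x => - g x) g (Set.Ioo (-c) c)).indicator
        (fun z : ℝ × ℝ => D' z.1 z.2) (x, y)) = fun _ => 0 := by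
      funext y
      exact Set.indicator_of_notMem (fun h => hx h.1) _
    rw [this, integral_zero]

lemma int_split (c : ℝ) (hc : 0 ≤ c) (h : ℝ → ℝ) (hh : Continuous h) :
    ∫ x in Set.Ioo (-c) c, h x = ∫ x in Set.Ioo 0 c, (h x + h (-x)) := by
  have hn : Continuous fun x => h (-x) := hh.comp continuous_neg
  rw [← integral_Ioc_eq_integral_Ioo, ← integral_Ioc_eq_integral_Ioo,
    ← intervalIntegral.integral_of_le (by linarith), ← intervalIntegral.integral_of_le hc,
    intervalIntegral.integral_add (hh.intervalIntegrable _ _) (hn.intervalIntegrable _ _),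
    intervalIntegral.integral_comp_neg, neg_zero, add_comm,
    intervalIntegral.integral_add_adjacent_intervals (hh.intervalIntegrable _ _)
      (hh.intervalIntegrable _ _)]

lemma subst_sin (c : ℝ) (hc : 0 < c) (h : ℝ → ℝ) :
    ∫ y in Set.Ioo 0 c, h y =
      ∫ θ in Set.Ioo 0 (Real.pi / 2), c * Real.cos θ * h (c * Real.sin θ) := by
  have hp := Real.pi_pos
  have himg : (fun θ => c * Real.sin θ) '' Set.Ioo 0 (Real.pi / 2) = Set.Ioo 0 c := by
    ext y
    constructor
    · rintro ⟨θ, hθ, rfl⟩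
      have h1 := Real.sin_pos_of_pos_of_lt_pi hθ.1 (by linarith [hθ.2])
      have h2 : Real.sin θ < 1 := by
        rw [← Real.sin_pi_div_two]
        exact Real.sin_lt_sin_of_lt_of_le_pi_div_two (by linarith [hθ.1]) le_rfl hθ.2
      exact ⟨by positivity, by nlinarith⟩
    · rintro ⟨h1, h2⟩
      refine ⟨Real.arcsin (y / c), ⟨Real.arcsin_pos.2 (by positivity), Real.arcsin_lt_pi_div_two.2 ((div_lt_one hc).2 h2)⟩, ?_⟩
      simp only
      rw [Real.sin_arcsin (by have : 0 < y / c := by positivity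
                              linarith) ((div_lt_one hc).2 h2).le]
      field_simp
  rw [← himg, integral_image_eq_integral_abs_deriv_smul (f' := fun θ => c * Real.cos θ) measurableSet_Ioo]
  · refine setIntegral_congr_fun measurableSet_Ioo fun θ hθ => ?_
    simp only [smul_eq_mul]
    rw [abs_of_pos (mul_pos hc (gam_cos_nonneg hθ))]
  · intro θ hθ
    exact ((Real.hasDerivAt_sin θ).const_mul c).hasDerivWithinAt
  · intro a ha b hb hab
    have := mul_left_cancel₀ hc.ne' hab
    exact Real.injOn_sin ⟨by linarith [ha.1], ha.2.le⟩ ⟨by linarith [hb.1], hb.2.le⟩ this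

lemma subst_cos (c : ℝ) (hc : 0 < c) (h : ℝ → ℝ) :
    ∫ y in Set.Ioo 0 c, h y =
      ∫ θ in Set.Ioo 0 (Real.pi / 2), c * (Real.sin θ / (2 * √(Real.cos θ))) * h (c * √(Real.cos θ)) := by
  have hp := Real.pi_pos
  have himg : (fun θ => c * √(Real.cos θ)) '' Set.Ioo 0 (Real.pi / 2) = Set.Ioo 0 c := by
    ext y
    constructor
    · rintro ⟨θ, hθ, rfl⟩
      have h1 := Real.sqrt_pos.2 (gam_cos_nonneg hθ)
      have h2 : √(Real.cos θ) < 1 := by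
        rw [Real.sqrt_lt' one_pos, one_pow, ← Real.cos_zero]
        exact Real.cos_lt_cos_of_nonneg_of_le_pi_div_two le_rfl hθ.2.le hθ.1
      exact ⟨by positivity, by nlinarith⟩
    · rintro ⟨h1, h2⟩
      have h3 : 0 < y / c := by positivity
      have h4 : y / c < 1 := (div_lt_one hc).2 h2
      refine ⟨Real.arccos ((y / c) ^ 2), ⟨Real.arccos_pos.2 (by nlinarith), Real.arccos_lt_pi_div_two.2 (by positivity)⟩, ?_⟩
      simp only
      rw [Real.cos_arccos (by nlinarith) (by nlinarith), Real.sqrt_sq h3.le]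
      field_simp
  rw [← himg, integral_image_eq_integral_abs_deriv_smul
    (f' := fun θ => c * (- Real.sin θ / (2 * √(Real.cos θ)))) measurableSet_Ioo]
  · refine setIntegral_congr_fun measurableSet_Ioo fun θ hθ => ?_
    simp only [smul_eq_mul]
    have h1 := Real.sqrt_pos.2 (gam_cos_nonneg hθ)
    have h2 := Real.sin_pos_of_pos_of_lt_pi hθ.1 (by linarith [hθ.2])
    rw [neg_div, mul_neg, abs_neg, abs_of_pos (by positivity)]
  · intro θ hθ
    exact (((Real.hasDerivAt_cos θ).sqrt (gam_cos_nonneg hθ).ne').const_mul c).hasDerivWithinAt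
  · intro a ha b hb hab
    have := mul_left_cancel₀ hc.ne' hab
    have := (Real.sqrt_inj (gam_cos_nonneg ha).le (gam_cos_nonneg hb).le).1 this
    exact Real.injOn_cos ⟨ha.1.le, by linarith [ha.2]⟩ ⟨hb.1.le, by linarith [hb.2]⟩ this

lemma mem_egBall (R : ℝ) (hR : 0 < R) (p : E2) :
    p ∈ egBall R ↔ (p 0) ^ 4 + 4 * (p 1) ^ 2 < R ^ 4 := by
  change ((p 0) ^ 4 + 4 * (p 1) ^ 2) ^ ((1 : ℝ) / 4) < R ↔ _
  rw [one_div, Real.rpow_inv_lt_iff_of_pos (by positivity) hR.le (by norm_num)]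
  norm_cast

lemma e2_measurePreserving : MeasurePreserving (fun z : ℝ × ℝ => (!₂[z.1, z.2] : E2)) := by
  have h := (PiLp.volume_preserving_toLp (Fin 2)).comp ((volume_preserving_finTwoArrow ℝ).symm _)
  exact h

lemma e2_embedding : MeasurableEmbedding (fun z : ℝ × ℝ => (!₂[z.1, z.2] : E2)) := by
  refine Measurable.measurableEmbedding ?_ ?_
  · exact (e2_continuous continuous_fst continuous_snd).measurable
  · rintro ⟨a, b⟩ ⟨c, d⟩ h
    have h0 := congrArg (fun p : E2 => p 0) h
    have h1 := congrArg (fun p : E2 => p 1) h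
    simp at h0 h1
    rw [h0, h1]

lemma ball_integral (R : ℝ) (g : E2 → ℝ) :
    ∫ p in egBall R, g p =
      ∫ z in (fun z : ℝ × ℝ => (!₂[z.1, z.2] : E2)) ⁻¹' egBall R, g !₂[z.1, z.2] :=
  (e2_measurePreserving.setIntegral_preimage_emb e2_embedding g _).symm

/-- Height of the ball above `x`. -/
noncomputable def yp (R x : ℝ) : ℝ := √(R ^ 4 - x ^ 4) / 2
/-- Width of the ball at `y`. -/
noncomputable def xp (R y : ℝ) : ℝ := √√(R ^ 4 - 4 * y ^ 2)

lemma ball_region_y (R : ℝ) (hR : 0 < R) :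
    (fun z : ℝ × ℝ => (!₂[z.1, z.2] : E2)) ⁻¹' egBall R =
      regionBetween (fun x => - yp R x) (yp R) (Set.Ioo (-R) R) := by
  ext ⟨x, y⟩
  rw [Set.mem_preimage, mem_egBall R hR]
  simp only [regionBetween, Set.mem_ofPred_eq, Set.mem_Ioo, ← abs_lt]
  have h1 : |y| < yp R x ↔ 4 * y ^ 2 < R ^ 4 - x ^ 4 := by
    rw [yp, lt_div_iff₀ two_pos, Real.lt_sqrt (by positivity), mul_pow, sq_abs]
    constructor <;> intro h <;> linarith
  rw [h1]
  simp
  constructor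
  · intro h
    refine ⟨?_, by linarith⟩
    have : |x| ^ 4 < R ^ 4 := by
      rw [Even.pow_abs (by decide)]; nlinarith [sq_nonneg y]
    exact lt_of_pow_lt_pow_left₀ 4 hR.le this
  · rintro ⟨_, h⟩
    linarith

lemma ball_region_x (R : ℝ) (hR : 0 < R) :
    (fun z : ℝ × ℝ => (!₂[z.1, z.2] : E2)) ⁻¹' egBall R =
      Prod.swap ⁻¹' regionBetween (fun x => - xp R x) (xp R) (Set.Ioo (-(R ^ 2 / 2)) (R ^ 2 / 2)) := by
  ext ⟨x, y⟩
  rw [Set.mem_preimage, mem_egBall R hR]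
  simp only [regionBetween, Set.mem_preimage, Prod.swap, Set.mem_ofPred_eq, Set.mem_Ioo, ← abs_lt]
  have h1 : |x| < xp R y ↔ x ^ 4 < R ^ 4 - 4 * y ^ 2 := by
    rw [xp, Real.lt_sqrt (by positivity), Real.lt_sqrt (by positivity), sq_abs, ← pow_mul]
  rw [h1]
  simp
  constructor
  · intro h
    refine ⟨?_, by linarith⟩
    have : 0 ≤ x ^ 4 := by positivity
    exact abs_lt_of_sq_lt_sq (by nlinarith) (by positivity)
  · rintro ⟨_, h⟩
    linarith

lemma deriv_y (F : E2 → ℝ) (hF : ContDiff ℝ 1 F) (x y : ℝ) :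
    HasDerivAt (fun y => F !₂[x, y]) (epY F !₂[x, y]) y := by
  have h1 : HasDerivAt (fun y : ℝ => (!₂[x, y] : E2)) (EuclideanSpace.single 1 1) y := by
    have e : (fun y : ℝ => (!₂[x, y] : E2)) = fun y => !₂[x, 0] + y • EuclideanSpace.single 1 1 := by
      funext y; ext i; fin_cases i <;> simp
    rw [e]
    simpa using ((hasDerivAt_id y).smul_const (EuclideanSpace.single 1 (1 : ℝ) : E2)).const_add (!₂[x, 0] : E2)
  exact ((hF.differentiable one_ne_zero) _).hasFDerivAt.comp_hasDerivAt y h1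

lemma deriv_x (F : E2 → ℝ) (hF : ContDiff ℝ 1 F) (x y : ℝ) :
    HasDerivAt (fun x => F !₂[x, y]) (epX F !₂[x, y]) x := by
  have h1 : HasDerivAt (fun x : ℝ => (!₂[x, y] : E2)) (EuclideanSpace.single 0 1) x := by
    have e : (fun x : ℝ => (!₂[x, y] : E2)) = fun x => !₂[0, y] + x • EuclideanSpace.single 0 1 := by
      funext y; ext i; fin_cases i <;> simp
    rw [e]
    simpa using ((hasDerivAt_id x).smul_const (EuclideanSpace.single 0 (1 : ℝ) : E2)).const_add (!₂[0, y] : E2)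
  exact ((hF.differentiable one_ne_zero) _).hasFDerivAt.comp_hasDerivAt x h1

lemma epX_continuous (F : E2 → ℝ) (hF : ContDiff ℝ 1 F) : Continuous (epX F) :=
  (hF.continuous_fderiv one_ne_zero).clm_apply continuous_const
lemma epY_continuous (F : E2 → ℝ) (hF : ContDiff ℝ 1 F) : Continuous (epY F) :=
  (hF.continuous_fderiv one_ne_zero).clm_apply continuous_const
lemma epX_contDiff (F : E2 → ℝ) (hF : ContDiff ℝ 2 F) : ContDiff ℝ 1 (epX F) :=
  (hF.fderiv_right (m := 1) (by norm_num)).clm_apply contDiff_const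
lemma epY_contDiff (F : E2 → ℝ) (hF : ContDiff ℝ 2 F) : ContDiff ℝ 1 (epY F) :=
  (hF.fderiv_right (m := 1) (by norm_num)).clm_apply contDiff_const

lemma egScale_gam (R s t θ : ℝ) :
    egScale R (gam s t θ) = !₂[s * (R * √(Real.cos θ)), t * (R ^ 2 / 2 * Real.sin θ)] := by
  ext i
  fin_cases i
  · simp [egScale, gam]; ring
  · simp [egScale, gam]; ring

lemma egScale_continuous (R : ℝ) : Continuous (egScale R) := by
  have : egScale R = fun q => !₂[R * q 0, R ^ 2 * q 1] := by
    funext q; rfl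
  rw [this]
  exact e2_continuous (by fun_prop) (by fun_prop)

lemma int_dy (R : ℝ) (hR : 0 < R) (F : E2 → ℝ) (hF : ContDiff ℝ 1 F) :
    ∫ p in egBall R, epY F p = ∫ θ in Set.Ioo 0 (Real.pi / 2),
      R * (Real.sin θ / (2 * √(Real.cos θ))) *
        ∑ b : Bool × Bool, sgnB b.2 * F (egScale R (gam (sgnB b.1) (sgnB b.2) θ)) := by
  have hyc : Continuous (yp R) := by unfold yp; fun_prop
  have hFc := hF.continuous
  rw [ball_integral, ball_region_y R hR,
    region_int R (yp R) hyc (fun x => by unfold yp; positivity)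
      (fun x y => F !₂[x, y]) (fun x y => epY F !₂[x, y]) (deriv_y F hF)
      ((epY_continuous F hF).comp (e2_continuous continuous_fst continuous_snd)),
    int_split R hR.le (fun x => F !₂[x, yp R x] - F !₂[x, - yp R x]) ((hFc.comp (e2_continuous continuous_id hyc)).sub
      (hFc.comp (e2_continuous continuous_id hyc.neg))), subst_cos R hR]
  refine setIntegral_congr_fun measurableSet_Ioo fun θ hθ => ?_
  have hc := gam_cos_nonneg hθ
  have hs := Real.sin_pos_of_pos_of_lt_pi hθ.1 (by linarith [hθ.2, Real.pi_pos])
  have e1 : yp R (R * √(Real.cos θ)) = R ^ 2 / 2 * Real.sin θ := by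
    have : R ^ 4 - (R * √(Real.cos θ)) ^ 4 = (R ^ 2 * Real.sin θ) ^ 2 := by
      have h1 := Real.sq_sqrt hc.le
      have h2 := Real.sin_sq_add_cos_sq θ
      have : (R * √(Real.cos θ)) ^ 4 = R ^ 4 * (√(Real.cos θ) ^ 2) ^ 2 := by ring
      rw [this, h1]
      linear_combination (-R ^ 4) * h2
    rw [yp, this, Real.sqrt_sq (by positivity)]
    ring
  have e2 : yp R (-(R * √(Real.cos θ))) = R ^ 2 / 2 * Real.sin θ := by
    rw [← e1, yp, yp, Even.neg_pow (by decide)]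
  simp only [e1, e2, egScale_gam, Fintype.sum_prod_type, Fintype.sum_bool, sgnB]
  simp
  left
  ring

lemma int_dx (R : ℝ) (hR : 0 < R) (F : E2 → ℝ) (hF : ContDiff ℝ 1 F) :
    ∫ p in egBall R, epX F p = ∫ θ in Set.Ioo 0 (Real.pi / 2),
      R ^ 2 / 2 * Real.cos θ *
        ∑ b : Bool × Bool, sgnB b.1 * F (egScale R (gam (sgnB b.1) (sgnB b.2) θ)) := by
  have hxc : Continuous (xp R) := by unfold xp; fun_prop
  have hFc := hF.continuous
  have hR2 : 0 < R ^ 2 / 2 := by positivity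
  have hswap : MeasurePreserving (Prod.swap : ℝ × ℝ → ℝ × ℝ) := Measure.measurePreserving_swap
  rw [ball_integral, ball_region_x R hR]
  have := hswap.setIntegral_preimage_emb MeasurableEquiv.prodComm.measurableEmbedding
    (fun z : ℝ × ℝ => epX F !₂[z.2, z.1])
    (regionBetween (fun x => - xp R x) (xp R) (Set.Ioo (-(R ^ 2 / 2)) (R ^ 2 / 2)))
  simp only [Prod.fst_swap, Prod.snd_swap] at this
  rw [this,
    region_int (R ^ 2 / 2) (xp R) hxc (fun x => by unfold xp; positivity)
      (fun y x => F !₂[x, y]) (fun y x => epX F !₂[x, y]) (fun y x => deriv_x F hF x y)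
      ((epX_continuous F hF).comp (e2_continuous continuous_snd continuous_fst)),
    int_split _ hR2.le (fun y => F !₂[xp R y, y] - F !₂[- xp R y, y]) ((hFc.comp (e2_continuous hxc continuous_id)).sub
      (hFc.comp (e2_continuous hxc.neg continuous_id))), subst_sin _ hR2]
  refine setIntegral_congr_fun measurableSet_Ioo fun θ hθ => ?_
  have hc := gam_cos_nonneg hθ
  have e1 : xp R (R ^ 2 / 2 * Real.sin θ) = R * √(Real.cos θ) := by
    have : R ^ 4 - 4 * (R ^ 2 / 2 * Real.sin θ) ^ 2 = (R ^ 2 * Real.cos θ) ^ 2 := by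
      have h2 := Real.sin_sq_add_cos_sq θ
      linear_combination (-R ^ 4) * h2
    rw [xp, this, Real.sqrt_sq (by positivity), Real.sqrt_mul (by positivity), Real.sqrt_sq hR.le]
  have e2 : xp R (-(R ^ 2 / 2 * Real.sin θ)) = R * √(Real.cos θ) := by
    rw [← e1, xp, xp, neg_sq]
  simp only [e1, e2, egScale_gam, Fintype.sum_prod_type, Fintype.sum_bool, sgnB]
  simp
  left
  ring

lemma ball_integrable (R : ℝ) (hR : 0 < R) (g : E2 → ℝ) (hg : Continuous g) :
    IntegrableOn g (egBall R) := by
  refine (hg.continuousOn.integrableOn_compact (isCompact_closedBall (0 : E2) (R + R ^ 2))).mono_set ?_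
  intro p hp
  rw [mem_egBall R hR] at hp
  rw [Metric.mem_closedBall]
  refine abs_le_of_sq_le_sq ?_ (by positivity) |> (le_abs_self _).trans
  rw [e2_dist_sq]
  simp only [PiLp.zero_apply, sub_zero]
  have h1 : p 0 ^ 2 ≤ R ^ 2 := by
    apply le_of_sq_le_sq
    nlinarith [sq_nonneg (p 1)]
    positivity
  have h2 : p 1 ^ 2 ≤ (R ^ 2) ^ 2 := by
    have : 0 ≤ p 0 ^ 4 := by positivity
    nlinarith [sq_nonneg (p 1)]
  have : 0 < R * R ^ 2 := by positivity
  nlinarith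

/-- the integration-by-parts inequality (Lemma 2.1 of the paper): for
`u ∈ C²` with `|∇_G u| ≤ K` everywhere and `v ∈ C¹` with `v ≥ 0`,
`∫_{B_R(0)} (⟨∇_G u, ∇_G v⟩ + v Δ_G u) ≥ −R² K ∫_{∂B₁(0)} v(RX, R²Y) dH¹(X,Y)`. -/
theorem grushin_integration_by_parts (u v : E2 → ℝ) (hu : ContDiff ℝ 2 u)
    (hv : ContDiff ℝ 1 v) (hvpos : ∀ p : E2, 0 ≤ v p)
    (K : ℝ) (hK : ∀ p : E2, Real.sqrt (egGradSq u p) ≤ K)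
    (R : ℝ) (hR : 0 < R) :
    -(R ^ 2 * K * ∫ q in egSphere, v (egScale R q) ∂μH[1]) ≤
      ∫ p in egBall R,
        (epX u p * epX v p + (p 0) ^ 2 * epY u p * epY v p + v p * egLap u p) := by
  have hK0 : 0 ≤ K := (Real.sqrt_nonneg _).trans (hK 0)
  have hux := epX_contDiff u hu
  have huy := epY_contDiff u hu
  have hvc := hv.continuous
  have huyc := huy.continuous
  have huxc := hux.continuous
  have hp0 : ContDiff ℝ 1 (fun p : E2 => p 0) := by fun_prop
  set F1 : E2 → ℝ := fun p => v p * epX u p with hF1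
  set F2 : E2 → ℝ := fun p => (p 0) ^ 2 * (v p * epY u p) with hF2
  have hF1c : ContDiff ℝ 1 F1 := hv.mul hux
  have hF2c : ContDiff ℝ 1 F2 := (hp0.pow 2).mul (hv.mul huy)
  have d1 : ∀ p, epX F1 p = epX u p * epX v p + v p * epXX u p := by
    intro p
    have h := (((hv.differentiable one_ne_zero) p).hasFDerivAt).mul
      (((hux.differentiable one_ne_zero) p).hasFDerivAt)
    have h' : fderiv ℝ F1 p = _ := h.fderiv
    rw [epX, h']
    simp [epX, epXX]
    ring
  have d2 : ∀ p, epY F2 p = (p 0) ^ 2 * epY u p * epY v p + v p * ((p 0) ^ 2 * epYY u p) := by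
    intro p
    have h := (((hv.differentiable one_ne_zero) p).hasFDerivAt).mul
      (((huy.differentiable one_ne_zero) p).hasFDerivAt)
    have hq : HasFDerivAt (fun p : E2 => p 0) (EuclideanSpace.proj 0 : E2 →L[ℝ] ℝ) p :=
      (EuclideanSpace.proj 0 : E2 →L[ℝ] ℝ).hasFDerivAt
    have h2 := (hq.pow 2).mul h
    have h' : fderiv ℝ F2 p = _ := h2.fderiv
    rw [epY, h']
    simp [epY, epYY]
    ring
  have hsum : ∫ p in egBall R,
        (epX u p * epX v p + (p 0) ^ 2 * epY u p * epY v p + v p * egLap u p) =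
      (∫ p in egBall R, epX F1 p) + ∫ p in egBall R, epY F2 p := by
    rw [← integral_add (ball_integrable R hR _ (epX_continuous F1 hF1c))
      (ball_integrable R hR _ (epY_continuous F2 hF2c))]
    congr 1
    funext p
    rw [d1, d2, egLap]
    ring
  have hIint : ∀ f : ℝ → ℝ, Continuous f → IntegrableOn f (Set.Ioo 0 (Real.pi / 2)) := fun f hf =>
    (hf.continuousOn.integrableOn_compact (isCompact_Icc (a := 0) (b := Real.pi / 2))).mono_set
      Set.Ioo_subset_Icc_self
  have hΓ : ∀ s t, Continuous fun θ => egScale R (gam s t θ) := fun s t =>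
    (egScale_continuous R).comp (gam_continuous s t)
  have hdy : ∫ p in egBall R, epY F2 p = ∫ θ in Set.Ioo 0 (Real.pi / 2),
      ∑ b : Bool × Bool, R ^ 3 / 2 * (√(Real.cos θ) * Real.sin θ) * (sgnB b.2 *
        (v (egScale R (gam (sgnB b.1) (sgnB b.2) θ)) * epY u (egScale R (gam (sgnB b.1) (sgnB b.2) θ)))) := by
    rw [int_dy R hR F2 hF2c]
    refine setIntegral_congr_fun measurableSet_Ioo fun θ hθ => ?_
    simp only [Finset.mul_sum]
    refine Finset.sum_congr rfl fun b _ => ?_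
    have hc := Real.sqrt_pos.2 (gam_cos_nonneg hθ)
    have e : (egScale R (gam (sgnB b.1) (sgnB b.2) θ)) 0 = sgnB b.1 * (R * √(Real.cos θ)) := by
      rw [egScale_gam]; simp
    simp only [hF2, e]
    rw [mul_pow, sgnB_sq]
    field_simp
  rw [hsum, hdy, int_dx R hR F1 hF1c, ← integral_add]
  rotate_left
  · apply hIint
    have := hF1c.continuous
    have := hΓ
    fun_prop
  · apply hIint
    have := hΓ
    fun_prop
  have hlow := sphere_lower (fun q => v (egScale R q)) (hvc.comp (egScale_continuous R))
    (fun p => hvpos _)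
  have hvi : ∀ b : Bool × Bool, IntegrableOn
      (fun θ => v (egScale R (gam (sgnB b.1) (sgnB b.2) θ))) (Set.Ioo 0 (Real.pi / 2)) :=
    fun b => hIint _ (hvc.comp (hΓ _ _))
  rw [← integral_finsetSum _ fun b _ => hvi b] at hlow
  have hmain : ∫ θ in Set.Ioo 0 (Real.pi / 2), (-(R ^ 2 / 2 * K)) *
      ∑ b : Bool × Bool, v (egScale R (gam (sgnB b.1) (sgnB b.2) θ)) ≤ _ :=
    setIntegral_mono_on (g := fun θ => R ^ 2 / 2 * Real.cos θ *
        ∑ b : Bool × Bool, sgnB b.1 * F1 (egScale R (gam (sgnB b.1) (sgnB b.2) θ)) +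
      ∑ b : Bool × Bool, R ^ 3 / 2 * (√(Real.cos θ) * Real.sin θ) * (sgnB b.2 *
        (v (egScale R (gam (sgnB b.1) (sgnB b.2) θ)) * epY u (egScale R (gam (sgnB b.1) (sgnB b.2) θ)))))
      (hIint _ (by have := hΓ; fun_prop))
      (hIint _ (by have := hΓ; have := hF1c.continuous; fun_prop))
      measurableSet_Ioo (by
        intro θ hθ
        rw [Finset.mul_sum, Finset.mul_sum, ← Finset.sum_add_distrib]
        refine Finset.sum_le_sum fun b _ => ?_
        have hs := sgnB_sq b.1
        have ht := sgnB_sq b.2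
        have e : (egScale R (gam (sgnB b.1) (sgnB b.2) θ)) 0 = sgnB b.1 * (R * √(Real.cos θ)) := by
          rw [egScale_gam]; simp
        generalize sgnB b.1 = s at *
        generalize sgnB b.2 = t at *
        generalize egScale R (gam s t θ) = p at *
        have hKp := hK p
        rw [Real.sqrt_le_left hK0, egGradSq] at hKp
        have hcs := Real.sin_sq_add_cos_sq θ
        set w := p 0 * epY u p with hw
        have hb : |s * epX u p * Real.cos θ + s * t * w * Real.sin θ| ≤ K := by
          refine abs_le_of_sq_le_sq ?_ hK0
          have e3 : (s * epX u p * Real.cos θ + s * t * w * Real.sin θ) ^ 2 =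
              (epX u p * Real.cos θ + t * w * Real.sin θ) ^ 2 := by
            linear_combination (epX u p * Real.cos θ + t * w * Real.sin θ) ^ 2 * hs
          have e4 : (epX u p * Real.cos θ + t * w * Real.sin θ) ^ 2 +
              (epX u p * Real.sin θ - t * w * Real.cos θ) ^ 2 = epX u p ^ 2 + w ^ 2 := by
            linear_combination (epX u p ^ 2 + t ^ 2 * w ^ 2) * hcs + w ^ 2 * ht
          have e5 : w ^ 2 = p 0 ^ 2 * epY u p ^ 2 := by rw [hw]; ring
          nlinarith [sq_nonneg (epX u p * Real.sin θ - t * w * Real.cos θ)]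
        have hb' := (abs_le.1 hb).1
        have e6 : R * √(Real.cos θ) = s * p 0 := by
          rw [e]; linear_combination (-(R * √(Real.cos θ))) * hs
        have e7 : R ^ 2 / 2 * Real.cos θ * (s * F1 p) +
            R ^ 3 / 2 * (√(Real.cos θ) * Real.sin θ) * (t * (v p * epY u p)) =
            R ^ 2 / 2 * v p * (s * epX u p * Real.cos θ + s * t * w * Real.sin θ) := by
          simp only [hF1, hw]
          linear_combination (R ^ 2 / 2 * Real.sin θ * t * v p * epY u p) * e6
        rw [e7]
        have hvp := hvpos p
        have := mul_le_mul_of_nonneg_left hb' (by positivity : 0 ≤ R ^ 2 / 2 * v p)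
        linarith)
  refine le_trans ?_ hmain
  rw [integral_const_mul]
  have := mul_le_mul_of_nonneg_left hlow (by positivity : 0 ≤ R ^ 2 / 2 * K)
  linarith
end

section
/- Let u ∈ C²(ℝ², [−1,1]) with |∇_G u| ∈ L^∞(ℝ²) solve Δ_G u = W'(u) in all of ℝ², and assume ∂_y u(ζ) > 0 for every ζ ∈ ℝ². Then there exists a constant C > 0, depending only on W and on ‖∇_G u‖_{L^∞(ℝ²)}, such that for every R > 0, ∫_{B_R(0)} ( |∇_G u|²/2 + W(u) ) dx dy ≤ C R². As a consequence, ∫_{B_R(0)} x² |∇_G u|² dx dy ≤ 2C R⁴ for every R > 0. -/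
open MeasureTheory

/-- A double-well potential as in the paper: `W ∈ C²`, even, `W(±1) = 0 ≤ W`,
`W''(0) ≠ 0`, `W''(±1) ≠ 0`, and `W'(s) = 0` iff `s ∈ {−1, 0, +1}`. -/
def DoubleWell (W : ℝ → ℝ) : Prop :=
  ContDiff ℝ 2 W ∧ (∀ r : ℝ, W (-r) = W r) ∧ W 1 = 0 ∧ W (-1) = 0 ∧ (∀ r : ℝ, 0 ≤ W r) ∧
    deriv (deriv W) 0 ≠ 0 ∧ deriv (deriv W) 1 ≠ 0 ∧ deriv (deriv W) (-1) ≠ 0 ∧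
    (∀ s : ℝ, deriv W s = 0 ↔ s = -1 ∨ s = 0 ∨ s = 1)

/-- Partial derivative in `x`. -/
noncomputable def pX (u : ℝ × ℝ → ℝ) (p : ℝ × ℝ) : ℝ := deriv (fun x => u (x, p.2)) p.1

/-- Partial derivative in `y`. -/
noncomputable def pY (u : ℝ × ℝ → ℝ) (p : ℝ × ℝ) : ℝ := deriv (fun y => u (p.1, y)) p.2

/-- Second partial derivative in `x`. -/
noncomputable def pXX (u : ℝ × ℝ → ℝ) (p : ℝ × ℝ) : ℝ :=
  deriv (deriv (fun x => u (x, p.2))) p.1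

/-- Second partial derivative in `y`. -/
noncomputable def pYY (u : ℝ × ℝ → ℝ) (p : ℝ × ℝ) : ℝ :=
  deriv (deriv (fun y => u (p.1, y))) p.2

/-- The Grushin Laplacian `Δ_G u = ∂_xx u + x² ∂_yy u`. -/
noncomputable def grushinLap (u : ℝ × ℝ → ℝ) (p : ℝ × ℝ) : ℝ := pXX u p + p.1 ^ 2 * pYY u p

/-- The squared length of the Grushin gradient: `|∇_G u|² = (∂_x u)² + x² (∂_y u)²`. -/
noncomputable def grushinGradSq (u : ℝ × ℝ → ℝ) (p : ℝ × ℝ) : ℝ :=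
  (pX u p) ^ 2 + p.1 ^ 2 * (pY u p) ^ 2

/-- The Grushin norm `‖(x,y)‖ = (x⁴ + 4y²)^(1/4)`. -/
noncomputable def gNorm (p : ℝ × ℝ) : ℝ := (p.1 ^ 4 + 4 * p.2 ^ 2) ^ ((1 : ℝ) / 4)

/-- The Grushin ball of radius `R` centered at `c`. -/
def gBall (c : ℝ × ℝ) (R : ℝ) : Set (ℝ × ℝ) := {p | gNorm (p - c) < R}

open Filter Topology Set

namespace GEE

/-! ### One-dimensional part -/

theorem dw_hasDeriv {W : ℝ → ℝ} (hW : DoubleWell W) (s : ℝ) : HasDerivAt W (deriv W s) s :=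
  ((hW.1.differentiable (by norm_num)) s).hasDerivAt

theorem dw_contDeriv {W : ℝ → ℝ} (hW : DoubleWell W) : Continuous (deriv W) :=
  hW.1.continuous_deriv (by norm_num)

theorem dw_anti {W : ℝ → ℝ} (hW : DoubleWell W) : StrictAntiOn W (Icc 0 1) := by
  have hinj : InjOn W (Icc 0 1) := by
    intro a ha b hb hab
    by_contra hne
    wlog hlt : a < b generalizing a b
    · exact this hb ha hab.symm (Ne.symm hne) (lt_of_le_of_ne (not_lt.1 hlt) (Ne.symm hne))
    obtain ⟨c, hc, hc'⟩ := exists_deriv_eq_zero hlt hW.1.continuous.continuousOn hab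
    have := (hW.2.2.2.2.2.2.2.2 c).1 hc'
    rcases this with h | h | h <;> linarith [hc.1, hc.2, ha.1, hb.2]
  rcases hW.1.continuous.continuousOn.strictMonoOn_of_injOn_Icc' zero_le_one hinj with h | h
  · have := h (left_mem_Icc.2 zero_le_one) (right_mem_Icc.2 zero_le_one) zero_lt_one
    linarith [hW.2.2.1, hW.2.2.2.2.1 0]
  · exact h

theorem dw_abs {W : ℝ → ℝ} (hW : DoubleWell W) (s : ℝ) : W |s| = W s := by
  rcases abs_choice s with h | h <;> rw [h]
  exact hW.2.1 s

theorem dw_le_iff {W : ℝ → ℝ} (hW : DoubleWell W) {s t : ℝ} (hs : |s| ≤ 1) (ht : |t| ≤ 1) :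
    W s ≤ W t ↔ |t| ≤ |s| := by
  rw [← dw_abs hW s, ← dw_abs hW t]
  exact (dw_anti hW).le_iff_ge ⟨abs_nonneg s, hs⟩ ⟨abs_nonneg t, ht⟩

theorem dw_deriv_neg {W : ℝ → ℝ} (hW : DoubleWell W) (s : ℝ) : deriv W (-s) = - deriv W s := by
  have h : (fun r => W (-r)) = W := funext hW.2.1
  have := deriv_comp_neg W s
  rw [h] at this
  linarith

/-- quadratic bound at the well `1`. -/
theorem dw_quad {W : ℝ → ℝ} (hW : DoubleWell W) :
    ∃ L : ℝ, 0 ≤ L ∧ ∀ s, |s| ≤ 1 → 2 * W s ≤ (L * (1 - s)) ^ 2 := by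
  have hd1 : ContDiff ℝ 1 (deriv W) := by
    have : ContDiff ℝ (1 + 1) W := by simpa [one_add_one_eq_two] using hW.1
    exact (contDiff_succ_iff_deriv.1 this).2.2
  have hc2 : Continuous (deriv (deriv W)) := hd1.continuous_deriv le_rfl
  obtain ⟨B, hB⟩ := (isCompact_Icc (a := (-1:ℝ)) (b := 1)).exists_bound_of_continuousOn hc2.continuousOn
  have hB0 : 0 ≤ B := le_trans (norm_nonneg _) (hB 0 (by norm_num))
  have hcrit : deriv W 1 = 0 := (hW.2.2.2.2.2.2.2.2 1).2 (by simp)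
  have h1 : ∀ s ∈ Icc (-1:ℝ) 1, |deriv W s| ≤ B * (1 - s) := by
    intro s hs
    have := (convex_Icc (-1:ℝ) 1).norm_image_sub_le_of_norm_deriv_le
      (f := deriv W) (C := B) (fun x _ => (hd1.differentiable (by norm_num)) x) hB
      (x := s) (y := 1) hs (by norm_num)
    rw [hcrit] at this
    simpa [abs_of_nonneg (sub_nonneg.2 hs.2)] using this
  refine ⟨Real.sqrt (2 * B), Real.sqrt_nonneg _, ?_⟩
  intro s hs
  rw [abs_le] at hs
  have h2 := (convex_Icc s 1).norm_image_sub_le_of_norm_deriv_le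
      (f := W) (C := B * (1 - s)) (fun x _ => (dw_hasDeriv hW x).differentiableAt)
      (fun x hx => (h1 x ⟨hs.1.trans hx.1, hx.2⟩).trans
        (mul_le_mul_of_nonneg_left (by linarith [hx.1]) hB0))
      (x := s) (y := 1) (left_mem_Icc.2 hs.2) (right_mem_Icc.2 hs.2)
  rw [hW.2.2.1, zero_sub, norm_neg, Real.norm_eq_abs, abs_of_nonneg (hW.2.2.2.2.1 s),
    Real.norm_eq_abs, abs_of_nonneg (sub_nonneg.2 hs.2)] at h2
  rw [mul_pow, Real.sq_sqrt (by positivity)]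
  nlinarith

/-- bounded solutions of the one-dimensional equation. -/
structure Sol (W v v' : ℝ → ℝ) : Prop where
  d1 : ∀ x, HasDerivAt v (v' x) x
  d2 : ∀ x, HasDerivAt v' (deriv W (v x)) x
  bd : ∀ x, |v x| ≤ 1

variable {W v v' : ℝ → ℝ}

theorem Sol.neg (hW : DoubleWell W) (h : Sol W v v') : Sol W (fun x => - v x) (fun x => - v' x) where
  d1 x := (h.d1 x).neg
  d2 x := by
    simp only [dw_deriv_neg hW]
    exact (h.d2 x).neg
  bd x := by simpa using h.bd x

theorem Sol.cont (h : Sol W v v') : Continuous v :=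
  continuous_iff_continuousAt.2 fun x => (h.d1 x).continuousAt

theorem Sol.cont' (h : Sol W v v') : Continuous v' :=
  continuous_iff_continuousAt.2 fun x => (h.d2 x).continuousAt

theorem Sol.first_integral (hW : DoubleWell W) (h : Sol W v v') :
    ∃ c, ∀ x, (v' x) ^ 2 / 2 - W (v x) = c := by
  refine ⟨(v' 0) ^ 2 / 2 - W (v 0), fun x => ?_⟩
  have hd : ∀ x, HasDerivAt (fun x => (v' x) ^ 2 / 2 - W (v x)) 0 x := by
    intro x
    have h1 := ((h.d2 x).pow 2).div_const 2
    have h2 := (dw_hasDeriv hW (v x)).comp x (h.d1 x)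
    exact (h1.sub h2).congr_deriv (by push_cast; ring)
  exact is_const_of_deriv_eq_zero (fun x => (hd x).differentiableAt) (fun x => (hd x).deriv) x 0

/-- constant sign of a nonvanishing continuous function on a ray or line. -/
theorem const_sign {f : ℝ → ℝ} {s : Set ℝ} (hs : OrdConnected s) (hf : Continuous f)
    (h0 : ∀ x ∈ s, f x ≠ 0) : (∀ x ∈ s, 0 ≤ f x) ∨ (∀ x ∈ s, f x ≤ 0) := by
  by_contra! hcon
  obtain ⟨⟨a, ha, hfa⟩, ⟨b, hb, hfb⟩⟩ := hcon
  have := (hs.isPreconnected).intermediate_value₂ ha hb hf.continuousOn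
    (continuousOn_const (c := (0:ℝ))) hfa.le hfb.le
  obtain ⟨x, hx, hx0⟩ := this
  exact h0 x hx hx0

theorem const_sign_univ {f : ℝ → ℝ} (hf : Continuous f)
    (h0 : ∀ x, f x ≠ 0) : (∀ x, 0 ≤ f x) ∨ (∀ x, f x ≤ 0) := by
  simpa using const_sign (s := univ) ordConnected_univ hf (fun x _ => h0 x)

/-- If `f → ℓ` and `f' → d` at infinity then `d = 0`. -/
theorem lim_deriv_zero {f f' : ℝ → ℝ} {l d : ℝ} (hd : ∀ x, HasDerivAt f (f' x) x)
    (hf : Tendsto f atTop (𝓝 l)) (hf' : Tendsto f' atTop (𝓝 d)) : d = 0 := by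
  have hmv : ∀ n : ℕ, ∃ c : ℝ, (n:ℝ) < c ∧ f' c = f (n + 1) - f n := by
    intro n
    obtain ⟨c, hc, hc'⟩ := exists_hasDerivAt_eq_slope f f' (a := (n:ℝ)) (b := n + 1) (by linarith)
      (fun x _ => (hd x).continuousAt.continuousWithinAt) (fun x _ => hd x)
    exact ⟨c, hc.1, by rw [hc']; simp⟩
  choose c hc hc' using hmv
  have hct : Tendsto c atTop atTop :=
    tendsto_atTop_mono (fun n => (hc n).le) tendsto_natCast_atTop_atTop
  have h1 := hf'.comp hct
  have h2 : Tendsto (fun n : ℕ => f (n + 1) - f n) atTop (𝓝 (l - l)) :=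
    (hf.comp (tendsto_atTop_add_const_right _ _ tendsto_natCast_atTop_atTop)).sub
      (hf.comp tendsto_natCast_atTop_atTop)
  have h3 : f' ∘ c = fun n : ℕ => f (n + 1) - f n := funext hc'
  rw [h3, ] at h1
  rw [sub_self] at h2
  exact tendsto_nhds_unique h1 h2

/-- a bounded monotone function converges -/
theorem lim_of_sign {f f' : ℝ → ℝ} (x0 : ℝ) (hd : ∀ x, HasDerivAt f (f' x) x) (hb : ∀ x, |f x| ≤ 1)
    (hs : ∀ x ∈ Ioi x0, 0 ≤ f' x) : ∃ l, Tendsto f atTop (𝓝 l) := by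
  have hm : MonotoneOn f (Ici x0) := by
    apply monotoneOn_of_deriv_nonneg (convex_Ici x0)
      (fun x _ => (hd x).continuousAt.continuousWithinAt)
      (fun x _ => (hd x).differentiableAt.differentiableWithinAt)
    intro x hx
    rw [interior_Ici] at hx
    rw [(hd x).deriv]
    exact hs x hx
  have hm2 : Monotone (fun x => f (max x x0)) := by
    intro a b hab
    exact hm (mem_Ici.2 (le_max_right _ _)) (mem_Ici.2 (le_max_right _ _)) (max_le_max_right _ hab)
  have := tendsto_atTop_ciSup hm2 ⟨1, by rintro _ ⟨x, rfl⟩; exact (abs_le.1 (hb _)).2⟩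
  refine ⟨_, this.congr' ?_⟩
  filter_upwards [eventually_ge_atTop x0] with x hx
  rw [max_eq_left hx]

/-- The first integral is nonpositive. -/
theorem Sol.c_nonpos (hW : DoubleWell W) (h : Sol W v v') {c : ℝ}
    (hc : ∀ x, (v' x) ^ 2 / 2 - W (v x) = c) : c ≤ 0 := by
  by_contra! hpos
  wlog hs : ∀ x, 0 ≤ v' x generalizing v v'
  · have hne : ∀ x, v' x ≠ 0 := by
      intro x hx
      have := hc x
      rw [hx] at this
      linarith [hW.2.2.2.2.1 (v x)]
    rcases const_sign_univ h.cont' hne with h1 | h1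
    · exact hs h1
    · refine this (h.neg hW) (fun x => ?_) (fun x => by simpa using h1 x)
      simp only [hW.2.1]
      rw [← hc x]; ring
  obtain ⟨l, hl⟩ := lim_of_sign 0 h.d1 h.bd (fun x _ => hs x)
  have hv' : ∀ x, v' x = Real.sqrt (2 * (c + W (v x))) := by
    intro x
    rw [← hc x, eq_comm, Real.sqrt_eq_iff_mul_self_eq (by nlinarith [sq_nonneg (v' x)]) (hs x)]
    ring
  have hlim : Tendsto v' atTop (𝓝 (Real.sqrt (2 * (c + W l)))) := by
    rw [show v' = _ from funext hv']
    have hcW : Continuous (fun s => Real.sqrt (2 * (c + W s))) := by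
      have := hW.1.continuous
      fun_prop
    exact (hcW.tendsto l).comp hl
  have h0 := lim_deriv_zero h.d1 hl hlim
  rw [Real.sqrt_eq_zero'] at h0
  linarith [hW.2.2.2.2.1 l]

/-- unique continuation at the well `1`. -/
theorem Sol.const_one (hW : DoubleWell W) (h : Sol W v v')
    (hc : ∀ x, (v' x) ^ 2 / 2 - W (v x) = 0) {x0 : ℝ} (h0 : v x0 = 1) : ∀ x, v' x = 0 := by
  obtain ⟨L, hL0, hL⟩ := dw_quad hW
  have habs : ∀ x, |v' x| ≤ L * (1 - v x) := by
    intro x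
    apply abs_le_of_sq_le_sq _ (mul_nonneg hL0 (by linarith [(abs_le.1 (h.bd x)).2]))
    have := hL (v x) (h.bd x)
    linarith [hc x]
  have hone : ∀ x, v x = 1 := by
    intro x
    have hle : v x ≤ 1 := (abs_le.1 (h.bd x)).2
    apply le_antisymm hle
    have hg1 : ∀ x, HasDerivAt (fun x => (1 - v x) * Real.exp (L * x))
        ((L * (1 - v x) - v' x) * Real.exp (L * x)) x := by
      intro x
      have e := ((hasDerivAt_id x).const_mul L).exp
      exact (((h.d1 x).const_sub 1).mul e).congr_deriv (by simp only [id]; ring)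
    have hg2 : ∀ x, HasDerivAt (fun x => (1 - v x) * Real.exp (-L * x))
        ((-(L * (1 - v x)) - v' x) * Real.exp (-L * x)) x := by
      intro x
      have e := ((hasDerivAt_id x).const_mul (-L)).exp
      exact (((h.d1 x).const_sub 1).mul e).congr_deriv (by simp only [id]; ring)
    have hm1 : Monotone (fun x => (1 - v x) * Real.exp (L * x)) :=
      monotone_of_deriv_nonneg (fun x => (hg1 x).differentiableAt) (fun x => by
        rw [(hg1 x).deriv]
        exact mul_nonneg (by linarith [(abs_le.1 (habs x)).2]) (Real.exp_pos _).le)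
    have hm2 : Antitone (fun x => (1 - v x) * Real.exp (-L * x)) :=
      antitone_of_deriv_nonpos (fun x => (hg2 x).differentiableAt) (fun x => by
        rw [(hg2 x).deriv]
        exact mul_nonpos_of_nonpos_of_nonneg (by linarith [(abs_le.1 (habs x)).1])
          (Real.exp_pos _).le)
    rcases le_total x x0 with hx | hx
    · have := hm1 hx
      simp only [h0, sub_self, zero_mul] at this
      have := nonpos_of_mul_nonpos_left this (Real.exp_pos _)
      linarith
    · have := hm2 hx
      simp only [h0, sub_self, zero_mul] at this
      have := nonpos_of_mul_nonpos_left this (Real.exp_pos _)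
      linarith
  intro x
  have := habs x
  rw [hone x] at this
  simpa using this

theorem Sol.sign_of_zero (hW : DoubleWell W) (h : Sol W v v')
    (hc : ∀ x, (v' x) ^ 2 / 2 - W (v x) = 0) : (∀ x, 0 ≤ v' x) ∨ (∀ x, v' x ≤ 0) := by
  by_cases hne : ∀ x, v' x ≠ 0
  · exact const_sign_univ h.cont' hne
  push Not at hne
  obtain ⟨x0, hx0⟩ := hne
  have hw : W (v x0) = 0 := by
    have := hc x0
    rw [hx0] at this
    linarith
  have h1 : 1 ≤ |v x0| := by
    have := (dw_le_iff hW (s := v x0) (t := 1) (h.bd x0) (by simp)).1 (by rw [hw, hW.2.2.1])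
    simpa using this
  have h2 : |v x0| = 1 := le_antisymm (h.bd x0) h1
  left
  rcases (abs_eq zero_le_one).1 h2 with h3 | h3
  · intro x
    rw [h.const_one hW hc h3 x]
  · intro x
    have := (h.neg hW).const_one hW (fun x => by simp only [hW.2.1]; rw [← hc x]; ring)
      (x0 := x0) (by simp [h3]) x
    linarith

/-- Energy bound for zero first integral. -/
theorem Sol.energy (hW : DoubleWell W) (h : Sol W v v') {K : ℝ} (hK : ∀ x, |v' x| ≤ K)
    (hc : ∀ x, (v' x) ^ 2 / 2 - W (v x) = 0) {a : ℝ} (ha : 0 < a) :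
    ∫ x in (-a)..a, (W (v x) - v x * deriv W (v x) / 2) ≤ 3 * K := by
  wlog hs : ∀ x, 0 ≤ v' x generalizing v v'
  · rcases h.sign_of_zero hW hc with h1 | h1
    · exact absurd h1 hs
    · have := this (h.neg hW) (fun x => by simpa using hK x)
        (fun x => by simp only [hW.2.1]; rw [← hc x]; ring) (fun x => by simpa using h1 x)
      simpa [hW.2.1, dw_deriv_neg hW] using this
  have hcv := h.cont
  have hcv' := h.cont'
  have hcW := hW.1.continuous
  have hcW' := dw_contDeriv hW
  have hK0 : 0 ≤ K := (abs_nonneg _).trans (hK 0)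
  have hle : ∀ x, W (v x) - v x * deriv W (v x) / 2 ≤
      K * v' x - (v' x * v' x + v x * deriv W (v x)) / 2 := by
    intro x
    have h1 := hc x
    have h2 : v' x ^ 2 ≤ K * v' x := by
      have := (abs_le.1 (hK x)).2
      nlinarith [hs x]
    nlinarith
  have hF : ∀ x, HasDerivAt (fun x => K * v x - (v x * v' x) / 2)
      (K * v' x - (v' x * v' x + v x * deriv W (v x)) / 2) x := fun x =>
    ((h.d1 x).const_mul K).sub (((h.d1 x).mul (h.d2 x)).div_const 2)
  calc _ ≤ ∫ x in (-a)..a, (K * v' x - (v' x * v' x + v x * deriv W (v x)) / 2) := by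
        apply intervalIntegral.integral_mono_on (by linarith) _ _ (fun x _ => hle x)
        · apply Continuous.intervalIntegrable; fun_prop
        · apply Continuous.intervalIntegrable; fun_prop
    _ = _ := intervalIntegral.integral_eq_sub_of_hasDerivAt (fun x _ => hF x)
        (by apply Continuous.intervalIntegrable; fun_prop)
    _ ≤ 3 * K := by
      have e1 : ∀ x, |v x * v' x| ≤ K := by
        intro x
        rw [abs_mul]
        calc _ ≤ 1 * K := mul_le_mul (h.bd x) (hK x) (abs_nonneg _) zero_le_one
          _ = K := one_mul _
      have e2 := abs_le.1 (e1 a)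
      have e3 := abs_le.1 (e1 (-a))
      have e4 := abs_le.1 (h.bd a)
      have e5 := abs_le.1 (h.bd (-a))
      nlinarith

/-- for negative first integral, `v'` has two zeros. -/
theorem Sol.two_zeros (hW : DoubleWell W) (h : Sol W v v') {c : ℝ}
    (hc : ∀ x, (v' x) ^ 2 / 2 - W (v x) = c) (hneg : c < 0) :
    ∃ x1 x2, x1 < x2 ∧ v' x1 = 0 ∧ v' x2 = 0 := by
  by_contra! hcon
  have hray : ∃ x0, ∀ x ∈ Ioi x0, v' x ≠ 0 := by
    by_cases hz : ∃ z, v' z = 0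
    · obtain ⟨z, hz⟩ := hz
      exact ⟨z, fun x hx => hcon z x hx hz⟩
    · push Not at hz
      exact ⟨0, fun x _ => hz x⟩
  obtain ⟨x0, hx0⟩ := hray
  wlog hs : ∀ x ∈ Ioi x0, 0 ≤ v' x generalizing v v'
  · rcases const_sign ordConnected_Ioi h.cont' hx0 with h1 | h1
    · exact hs h1
    · refine this (h.neg hW) (fun x => ?_) (by simpa using hcon) (by simpa using hx0)
        (fun x hx => by simpa using h1 x hx)
      simp only [hW.2.1]
      rw [← hc x]; ring
  obtain ⟨l, hl⟩ := lim_of_sign x0 h.d1 h.bd hs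
  have hcW := hW.1.continuous
  have hlim : Tendsto v' atTop (𝓝 (Real.sqrt (2 * (c + W l)))) := by
    have hcW : Continuous (fun s => Real.sqrt (2 * (c + W s))) := by fun_prop
    refine ((hcW.tendsto l).comp hl).congr' ?_
    filter_upwards [eventually_gt_atTop x0] with x hx
    simp only [Function.comp]
    rw [← hc x, Real.sqrt_eq_iff_mul_self_eq (by nlinarith [sq_nonneg (v' x)]) (hs x hx)]
    ring
  have h0 := lim_deriv_zero h.d1 hl hlim
  have hlim2 : Tendsto (fun x => deriv W (v x)) atTop (𝓝 (deriv W l)) :=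
    ((dw_contDeriv hW).tendsto l).comp hl
  have h1 := lim_deriv_zero h.d2 hlim hlim2
  have hlb : |l| ≤ 1 := le_of_tendsto hl.abs (Eventually.of_forall h.bd)
  have hWl : W l = -c := by
    have e1 : Tendsto (fun x => (v' x) ^ 2 / 2 - W (v x)) atTop (𝓝 (0 ^ 2 / 2 - W l)) := by
      rw [h0] at hlim
      exact ((hlim.pow 2).div_const 2).sub ((hcW.tendsto l).comp hl)
    have e2 : (fun x => (v' x) ^ 2 / 2 - W (v x)) = fun _ => c := funext hc
    rw [e2] at e1
    have := tendsto_nhds_unique e1 tendsto_const_nhds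
    linarith
  have hl0 : l = 0 := by
    rcases (hW.2.2.2.2.2.2.2.2 l).1 h1 with h2 | h2 | h2
    · rw [h2, hW.2.2.2.1] at hWl; linarith
    · exact h2
    · rw [h2, hW.2.2.1] at hWl; linarith
  have hv0 : ∀ x, v x = 0 := by
    intro x
    have := (dw_le_iff hW (s := l) (t := v x) hlb (h.bd x)).1
      (by rw [hWl]; nlinarith [hc x, sq_nonneg (v' x)])
    rw [hl0] at this
    simpa using this
  have hv : v = fun _ => 0 := funext hv0
  have hz : ∀ x, v' x = 0 := by
    intro x
    have := h.d1 x
    rw [hv] at this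
    exact this.unique (hasDerivAt_const x (0:ℝ))
  exact hx0 (x0 + 1) (by simp) (hz _)

/-- for negative first integral, `v` oscillates between `±m`. -/
theorem Sol.oscillate (hW : DoubleWell W) (h : Sol W v v') {c : ℝ}
    (hc : ∀ x, (v' x) ^ 2 / 2 - W (v x) = c) (hneg : c < 0) :
    ∃ m, (∀ x, |v x| ≤ m) ∧ (∃ p, v p = m) ∧ ∃ q, v q = -m := by
  obtain ⟨x1, x2, hlt, h1, h2⟩ := h.two_zeros hW hc hneg
  have hz : ∀ z, v' z = 0 → W (v z) = -c := by
    intro z hz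
    have := hc z
    rw [hz] at this
    linarith
  have hbd : ∀ z, v' z = 0 → ∀ x, |v x| ≤ |v z| := by
    intro z hz' x
    refine (dw_le_iff hW (h.bd z) (h.bd x)).1 ?_
    rw [hz z hz']
    nlinarith [hc x, sq_nonneg (v' x)]
  have heq : ∀ z, v' z = 0 → |v z| = |v x1| := fun z hz' =>
    le_antisymm (hbd x1 h1 z) (hbd z hz' x1)
  -- it suffices to find a critical point with the opposite value
  suffices hs : ∃ z, v z = - v x1 by
    obtain ⟨z, hz1⟩ := hs
    refine ⟨|v x1|, hbd x1 h1, ?_⟩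
    rcases abs_choice (v x1) with h3 | h3
    · exact ⟨⟨x1, h3.symm⟩, ⟨z, by rw [h3, hz1]⟩⟩
    · exact ⟨⟨z, by rw [h3, hz1]⟩, ⟨x1, by rw [h3, neg_neg]⟩⟩
  by_contra! hcon
  have hall : ∀ z, v' z = 0 → v z = v x1 := by
    intro z hz'
    rcases abs_eq_abs.1 (heq z hz') with h3 | h3
    · exact h3
    · exact absurd h3 (hcon z)
  have h12 : v x2 = v x1 := hall x2 h2
  -- v constant on [x1,x2]
  have hconst : ∀ x ∈ Ioo x1 x2, v x = v x1 := by
    intro x hx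
    obtain ⟨p, hp, hpm⟩ := isCompact_Icc.exists_isMaxOn (nonempty_Icc.2 hlt.le) h.cont.continuousOn
      (s := Icc x1 x2)
    obtain ⟨q, hq, hqm⟩ := isCompact_Icc.exists_isMinOn (nonempty_Icc.2 hlt.le) h.cont.continuousOn
      (s := Icc x1 x2)
    have hp1 : v p = v x1 := by
      by_cases e1 : p = x1
      · rw [e1]
      by_cases e2 : p = x2
      · rw [e2, h12]
      have hI : Icc x1 x2 ∈ 𝓝 p :=
        Icc_mem_nhds (lt_of_le_of_ne hp.1 (Ne.symm e1)) (lt_of_le_of_ne hp.2 e2)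
      exact hall p ((hpm.isLocalMax hI).hasDerivAt_eq_zero (h.d1 p))
    have hq1 : v q = v x1 := by
      by_cases e1 : q = x1
      · rw [e1]
      by_cases e2 : q = x2
      · rw [e2, h12]
      have hI : Icc x1 x2 ∈ 𝓝 q :=
        Icc_mem_nhds (lt_of_le_of_ne hq.1 (Ne.symm e1)) (lt_of_le_of_ne hq.2 e2)
      exact hall q ((hqm.isLocalMin hI).hasDerivAt_eq_zero (h.d1 q))
    have e1 := hpm ⟨hx.1.le, hx.2.le⟩
    have e2 := hqm ⟨hx.1.le, hx.2.le⟩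
    simp only [mem_ofPred_eq] at e1 e2
    linarith
  have hzero : ∀ x ∈ Ioo x1 x2, v' x = 0 := by
    intro x hx
    have e : v =ᶠ[𝓝 x] fun _ => v x1 := by
      filter_upwards [Ioo_mem_nhds hx.1 hx.2] with y hy using hconst y hy
    exact (h.d1 x).unique ((hasDerivAt_const x (v x1)).congr_of_eventuallyEq e)
  obtain ⟨x, hx⟩ := nonempty_Ioo.2 hlt
  have hW0 : deriv W (v x) = 0 := by
    have e : v' =ᶠ[𝓝 x] fun _ => 0 := by
      filter_upwards [Ioo_mem_nhds hx.1 hx.2] with y hy using hzero y hy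
    exact (h.d2 x).unique ((hasDerivAt_const x (0:ℝ)).congr_of_eventuallyEq e)
  have hWx := hz x (hzero x hx)
  rw [hconst x hx] at hW0 hWx
  rcases (hW.2.2.2.2.2.2.2.2 _).1 hW0 with h3 | h3 | h3
  · rw [h3, hW.2.2.2.1] at hWx; linarith
  · exact hcon x1 (by rw [h3]; simp)
  · rw [h3, hW.2.2.1] at hWx; linarith

/-- Of two strictly ordered solutions, one has zero first integral. -/
theorem Sol.one_good (hW : DoubleWell W) {w w' : ℝ → ℝ} (h : Sol W v v') (k : Sol W w w')
    (hlt : ∀ x, v x < w x) :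
    (∀ x, (v' x) ^ 2 / 2 - W (v x) = 0) ∨ (∀ x, (w' x) ^ 2 / 2 - W (w x) = 0) := by
  obtain ⟨c, hc⟩ := h.first_integral hW
  obtain ⟨d, hd⟩ := k.first_integral hW
  rcases (h.c_nonpos hW hc).lt_or_eq with hc0 | hc0
  · rcases (k.c_nonpos hW hd).lt_or_eq with hd0 | hd0
    · obtain ⟨m, hm, ⟨p, hp⟩, -⟩ := h.oscillate hW hc hc0
      obtain ⟨n, hn, -, ⟨q, hq⟩⟩ := k.oscillate hW hd hd0
      have e1 := hlt p
      have e2 := hlt q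
      have e3 := abs_le.1 (hn p)
      have e4 := abs_le.1 (hm q)
      linarith
    · right; rw [← hd0]; exact hd
  · left; rw [← hc0]; exact hc

/-! ### Two-dimensional part -/

/-- a solution, in coordinates, with its partial derivatives. -/
structure Dat (W : ℝ → ℝ) (K : ℝ) (u ux uy uxx uxy uyy : ℝ → ℝ → ℝ) : Prop where
  cu : Continuous (fun p : ℝ × ℝ => u p.1 p.2)
  cux : Continuous (fun p : ℝ × ℝ => ux p.1 p.2)
  cuy : Continuous (fun p : ℝ × ℝ => uy p.1 p.2)
  cuxx : Continuous (fun p : ℝ × ℝ => uxx p.1 p.2)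
  cuxy : Continuous (fun p : ℝ × ℝ => uxy p.1 p.2)
  cuyy : Continuous (fun p : ℝ × ℝ => uyy p.1 p.2)
  dx : ∀ x y, HasDerivAt (fun r => u r y) (ux x y) x
  dy : ∀ x y, HasDerivAt (fun r => u x r) (uy x y) y
  dxx : ∀ x y, HasDerivAt (fun r => ux r y) (uxx x y) x
  dxy : ∀ x y, HasDerivAt (fun r => ux x r) (uxy x y) y
  dyx : ∀ x y, HasDerivAt (fun r => uy r y) (uxy x y) x
  dyy : ∀ x y, HasDerivAt (fun r => uy x r) (uyy x y) y
  bd : ∀ x y, |u x y| ≤ 1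
  bx : ∀ x y, |ux x y| ≤ K
  bxy : ∀ x y, |x * uy x y| ≤ K
  pde : ∀ x y, uxx x y + x ^ 2 * uyy x y = deriv W (u x y)
  pos : ∀ x y, 0 < uy x y

theorem c2 {f : ℝ → ℝ → ℝ} (hf : Continuous (fun p : ℝ × ℝ => f p.1 p.2)) {X : Type*}
    [TopologicalSpace X] {a b : X → ℝ} (ha : Continuous a) (hb : Continuous b) :
    Continuous (fun x => f (a x) (b x)) :=
  hf.comp (ha.prodMk hb)

theorem swap_int {f : ℝ → ℝ → ℝ} (hf : Continuous (fun p : ℝ × ℝ => f p.1 p.2)) (a b c d : ℝ) :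
    ∫ x in a..b, ∫ y in c..d, f x y = ∫ y in c..d, ∫ x in a..b, f x y := by
  simp only [intervalIntegral.intervalIntegral_eq_integral_uIoc _ c d]
  rw [intervalIntegral.integral_smul, intervalIntegral_integral_swap]
  rw [Measure.prod_restrict]
  have : IntegrableOn (Function.uncurry f) (uIcc a b ×ˢ uIcc c d) (volume.prod volume) :=
    ContinuousOn.integrableOn_compact (isCompact_uIcc.prod isCompact_uIcc)
      (show Continuous (Function.uncurry f) from hf).continuousOn
  exact this.mono_set (prod_mono uIoc_subset_uIcc uIoc_subset_uIcc)

/-- the averaging kernel and its second derivative. -/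
def rho (s : ℝ) : ℝ := 30 * s ^ 2 * (1 - s) ^ 2
def rho2 (s : ℝ) : ℝ := 60 * (1 - 6 * s + 6 * s ^ 2)

theorem c_rho : Continuous rho := by unfold rho; fun_prop
theorem c_rho2 : Continuous rho2 := by unfold rho2; fun_prop

theorem rho_nonneg (s : ℝ) : 0 ≤ rho s := by unfold rho; positivity

theorem int_rho : ∫ s in (0:ℝ)..1, rho s = 1 := by
  have h : ∀ s : ℝ, HasDerivAt (fun s : ℝ => 10 * s ^ 3 - 15 * s ^ 4 + 6 * s ^ 5) (rho s) s := by
    intro s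
    have := (((hasDerivAt_pow 3 s).const_mul 10).sub ((hasDerivAt_pow 4 s).const_mul 15)).add
      ((hasDerivAt_pow 5 s).const_mul 6)
    exact this.congr_deriv (by unfold rho; push_cast; ring)
  rw [intervalIntegral.integral_eq_sub_of_hasDerivAt (fun s _ => h s)
    (c_rho.intervalIntegrable _ _)]
  norm_num

theorem int_rho2 : ∫ s in (0:ℝ)..1, rho2 s = 0 := by
  have h : ∀ s : ℝ, HasDerivAt (fun s : ℝ => 60 * s - 180 * s ^ 2 + 120 * s ^ 3) (rho2 s) s := by
    intro s
    have := (((hasDerivAt_id s).const_mul 60).sub ((hasDerivAt_pow 2 s).const_mul 180)).add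
      ((hasDerivAt_pow 3 s).const_mul 120)
    exact this.congr_deriv (by unfold rho2; push_cast; ring)
  rw [intervalIntegral.integral_eq_sub_of_hasDerivAt (fun s _ => h s)
    (c_rho2.intervalIntegrable _ _)]
  norm_num

theorem ibp_rho {f f' f'' : ℝ → ℝ} (h1 : ∀ s, HasDerivAt f (f' s) s)
    (h2 : ∀ s, HasDerivAt f' (f'' s) s) (hc : Continuous f'') :
    ∫ s in (0:ℝ)..1, rho s * f'' s = ∫ s in (0:ℝ)..1, rho2 s * f s := by
  have hf : Continuous f := continuous_iff_continuousAt.2 fun x => (h1 x).continuousAt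
  have hd : ∀ s : ℝ, HasDerivAt
      (fun s => rho s * f' s - (60 * s - 180 * s ^ 2 + 120 * s ^ 3) * f s)
      (rho s * f'' s - rho2 s * f s) s := by
    intro s
    have a1 : HasDerivAt (fun s : ℝ => 60 * s - 180 * s ^ 2 + 120 * s ^ 3) (rho2 s) s := by
      have := (((hasDerivAt_id s).const_mul 60).sub ((hasDerivAt_pow 2 s).const_mul 180)).add
        ((hasDerivAt_pow 3 s).const_mul 120)
      exact this.congr_deriv (by unfold rho2; push_cast; ring)
    have a2 : HasDerivAt rho (60 * s - 180 * s ^ 2 + 120 * s ^ 3) s := by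
      have := (((hasDerivAt_pow 2 s).const_mul 30).sub ((hasDerivAt_pow 3 s).const_mul 60)).add
        ((hasDerivAt_pow 4 s).const_mul 30)
      refine (this.congr_deriv (by push_cast; ring)).congr_of_eventuallyEq
        (Eventually.of_forall fun r => ?_)
      simp only [Pi.add_apply, Pi.sub_apply, rho]
      ring
    exact ((a2.mul (h2 s)).sub (a1.mul (h1 s))).congr_deriv (by ring)
  have i1 : IntervalIntegrable (fun s => rho s * f'' s) volume 0 1 :=
    (c_rho.mul hc).intervalIntegrable _ _
  have i2 : IntervalIntegrable (fun s => rho2 s * f s) volume 0 1 :=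
    (c_rho2.mul hf).intervalIntegrable _ _
  have := intervalIntegral.integral_eq_sub_of_hasDerivAt (fun s _ => hd s) (i1.sub i2)
  rw [intervalIntegral.integral_sub i1 i2] at this
  have e : rho 1 * f' 1 - (60 * 1 - 180 * 1 ^ 2 + 120 * 1 ^ 3) * f 1 -
      (rho 0 * f' 0 - (60 * 0 - 180 * 0 ^ 2 + 120 * 0 ^ 3) * f 0) = 0 := by
    simp only [rho]; ring
  rw [e] at this
  linarith

section limits

variable {K : ℝ} {u ux uy uxx uxy uyy : ℝ → ℝ → ℝ} {t : ℕ → ℝ}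

theorem bound_comp {G : ℝ → ℝ} (hG : Continuous G) : ∃ B, 0 ≤ B ∧ ∀ s, |s| ≤ 1 → |G s| ≤ B := by
  obtain ⟨B, hB⟩ := (isCompact_Icc (a := (-1:ℝ)) (b := 1)).exists_bound_of_continuousOn
    hG.continuousOn
  exact ⟨B, (norm_nonneg _).trans (hB 0 (by norm_num)), fun s hs => hB s (abs_le.1 hs)⟩

theorem Dat.lim1 (h : Dat W K u ux uy uxx uxy uyy)
    (hv : ∀ x s, Tendsto (fun n => u x (t n + s)) atTop (𝓝 (v x)))
    {k G : ℝ → ℝ} (hk : Continuous k) (hG : Continuous G) (x : ℝ) :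
    Tendsto (fun n => ∫ s in (0:ℝ)..1, k s * G (u x (t n + s))) atTop
      (𝓝 ((∫ s in (0:ℝ)..1, k s) * G (v x))) := by
  obtain ⟨B, hB0, hB⟩ := bound_comp hG
  rw [← intervalIntegral.integral_mul_const]
  apply intervalIntegral.tendsto_integral_filter_of_dominated_convergence (fun s => |k s| * B)
  · refine Eventually.of_forall fun n => Continuous.aestronglyMeasurable ?_
    exact hk.mul (hG.comp (c2 h.cu continuous_const (by fun_prop)))
  · refine Eventually.of_forall fun n => Eventually.of_forall fun s _ => ?_
    rw [norm_mul]
    exact mul_le_mul_of_nonneg_left (hB _ (h.bd _ _)) (norm_nonneg _)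
  · apply Continuous.intervalIntegrable; fun_prop
  · refine Eventually.of_forall fun s _ => ?_
    exact ((hG.tendsto _).comp (hv x s)).const_mul _

theorem Dat.lim2 (h : Dat W K u ux uy uxx uxy uyy)
    (hv : ∀ x s, Tendsto (fun n => u x (t n + s)) atTop (𝓝 (v x)))
    {k G c : ℝ → ℝ} (hk : Continuous k) (hG : Continuous G) (hc : Continuous c) (a b : ℝ) :
    Tendsto (fun n => ∫ x in a..b, c x * ∫ s in (0:ℝ)..1, k s * G (u x (t n + s))) atTop
      (𝓝 (∫ x in a..b, c x * ((∫ s in (0:ℝ)..1, k s) * G (v x)))) := by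
  obtain ⟨B, hB0, hB⟩ := bound_comp hG
  apply intervalIntegral.tendsto_integral_filter_of_dominated_convergence
    (fun x => |c x| * ∫ s in (0:ℝ)..1, |k s| * B)
  · refine Eventually.of_forall fun n => Continuous.aestronglyMeasurable ?_
    refine hc.mul (intervalIntegral.continuous_parametric_intervalIntegral_of_continuous' ?_ 0 1)
    exact (hk.comp continuous_snd).mul (hG.comp (c2 h.cu continuous_fst (by fun_prop)))
  · refine Eventually.of_forall fun n => Eventually.of_forall fun x _ => ?_
    rw [norm_mul]
    refine mul_le_mul_of_nonneg_left ?_ (norm_nonneg _)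
    refine intervalIntegral.norm_integral_le_of_norm_le zero_le_one
      (Eventually.of_forall fun s _ => ?_) ?_
    · rw [norm_mul]
      exact mul_le_mul_of_nonneg_left (hB _ (h.bd _ _)) (norm_nonneg _)
    · apply Continuous.intervalIntegrable; fun_prop
  · apply Continuous.intervalIntegrable; fun_prop
  · refine Eventually.of_forall fun x _ => ?_
    exact (h.lim1 hv hk hG x).const_mul _

theorem Dat.taylor (h : Dat W K u ux uy uxx uxy uyy) (x y : ℝ) :
    u x y - u 0 y - x * ux 0 y = ∫ r in (0:ℝ)..x, (x - r) * uxx r y := by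
  have hd : ∀ r, HasDerivAt (fun r => (x - r) * ux r y + u r y) ((x - r) * uxx r y) r := by
    intro r
    exact ((((hasDerivAt_id r).const_sub x).mul (h.dxx r y)).add (h.dx r y)).congr_deriv
      (by simp only [id]; ring)
  have hc : Continuous (fun r => (x - r) * uxx r y) :=
    (by fun_prop : Continuous fun r => x - r).mul (c2 h.cuxx continuous_id continuous_const)
  rw [intervalIntegral.integral_eq_sub_of_hasDerivAt (fun s _ => hd s) (hc.intervalIntegrable _ _)]
  ring

theorem Dat.avg (h : Dat W K u ux uy uxx uxy uyy) (hW : DoubleWell W) (x y : ℝ) :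
    ∫ s in (0:ℝ)..1, rho s * uxx x (y + s) =
      (∫ s in (0:ℝ)..1, rho s * deriv W (u x (y + s))) -
        x ^ 2 * ∫ s in (0:ℝ)..1, rho2 s * u x (y + s) := by
  have hc : Continuous (fun s => uyy x (y + s)) := c2 h.cuyy continuous_const (by fun_prop)
  have hcW := dw_contDeriv hW
  have hcu : Continuous (fun s => u x (y + s)) := c2 h.cu continuous_const (by fun_prop)
  have e := ibp_rho (fun s => (h.dy x (y + s)).comp_const_add y s)
    (fun s => (h.dyy x (y + s)).comp_const_add y s) hc
  rw [← e, ← intervalIntegral.integral_const_mul, ← intervalIntegral.integral_sub]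
  · refine intervalIntegral.integral_congr fun s _ => ?_
    rw [← h.pde]; ring
  · exact (c_rho.mul (hcW.comp hcu)).intervalIntegrable _ _
  · exact (continuous_const.mul (c_rho.mul hc)).intervalIntegrable _ _

/-- limit profiles solve the one-dimensional equation. -/
theorem Dat.sol (h : Dat W K u ux uy uxx uxy uyy) (hW : DoubleWell W)
    (hv : ∀ x s, Tendsto (fun n => u x (t n + s)) atTop (𝓝 (v x))) :
    ∃ v', Sol W v v' ∧ ∀ x, |v' x| ≤ K := by
  have hK0 : 0 ≤ K := (abs_nonneg _).trans (h.bx 0 0)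
  have hcW := dw_contDeriv hW
  have hbd : ∀ x, |v x| ≤ 1 := fun x =>
    le_of_tendsto (hv x 0).abs (Eventually.of_forall fun n => h.bd _ _)
  have hlip : LipschitzWith K.toNNReal v := by
    refine LipschitzWith.of_dist_le_mul fun x y => ?_
    rw [Real.coe_toNNReal _ hK0]
    refine le_of_tendsto ((hv x 0).dist (hv y 0)) (Eventually.of_forall fun n => ?_)
    have := convex_univ.norm_image_sub_le_of_norm_hasDerivWithin_le (C := K)
      (fun x _ => (h.dx x (t n + 0)).hasDerivWithinAt) (fun x _ => h.bx x _) (mem_univ y) (mem_univ x)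
    rwa [dist_eq_norm, dist_eq_norm]
  have hcv := hlip.continuous
  have hlim : ∀ x, Tendsto (fun n => ∫ r in (0:ℝ)..x, (x - r) *
      ∫ s in (0:ℝ)..1, rho s * uxx r (t n + s)) atTop
      (𝓝 (∫ r in (0:ℝ)..x, (x - r) * deriv W (v r))) := by
    intro x
    have l1 := h.lim2 hv c_rho hcW (c := fun r => x - r) (by fun_prop) 0 x
    have l2 := h.lim2 hv c_rho2 continuous_id (c := fun r => (x - r) * r ^ 2) (by fun_prop) 0 x
    have l3 := l1.sub l2
    simp only [int_rho, int_rho2, one_mul, zero_mul, mul_zero, intervalIntegral.integral_zero,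
      sub_zero] at l3
    refine l3.congr fun n => ?_
    rw [← intervalIntegral.integral_sub]
    · refine intervalIntegral.integral_congr fun r _ => ?_
      simp only [id]
      rw [h.avg hW]; ring
    · refine Continuous.intervalIntegrable ((by fun_prop : Continuous fun r => x - r).mul
        (intervalIntegral.continuous_parametric_intervalIntegral_of_continuous' ?_ 0 1)) _ _
      exact (c_rho.comp continuous_snd).mul (hcW.comp (c2 h.cu continuous_fst (by fun_prop)))
    · refine Continuous.intervalIntegrable ((by fun_prop : Continuous fun r => (x - r) * r ^ 2).mul
        (intervalIntegral.continuous_parametric_intervalIntegral_of_continuous' ?_ 0 1)) _ _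
      exact (c_rho2.comp continuous_snd).mul (c2 h.cu continuous_fst (by fun_prop))
  have hA : ∀ x, Tendsto (fun n => ∫ s in (0:ℝ)..1, rho s * u x (t n + s)) atTop (𝓝 (v x)) := by
    intro x
    simpa [int_rho] using h.lim1 hv c_rho continuous_id x
  have hid : ∀ x n, (∫ s in (0:ℝ)..1, rho s * u x (t n + s)) -
      (∫ s in (0:ℝ)..1, rho s * u 0 (t n + s)) -
      x * (∫ s in (0:ℝ)..1, rho s * ux 0 (t n + s)) =
      ∫ r in (0:ℝ)..x, (x - r) * ∫ s in (0:ℝ)..1, rho s * uxx r (t n + s) := by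
    intro x n
    have i1 : ∀ x, IntervalIntegrable (fun s => rho s * u x (t n + s)) volume 0 1 := fun x =>
      (c_rho.mul (c2 h.cu continuous_const (by fun_prop))).intervalIntegrable _ _
    have i2 : IntervalIntegrable (fun s => x * (rho s * ux 0 (t n + s))) volume 0 1 :=
      (continuous_const.mul
        (c_rho.mul (c2 h.cux continuous_const (by fun_prop)))).intervalIntegrable _ _
    rw [← intervalIntegral.integral_const_mul, ← intervalIntegral.integral_sub (i1 x) (i1 0),
      ← intervalIntegral.integral_sub ((i1 x).sub (i1 0)) i2]
    simp only [← intervalIntegral.integral_const_mul]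
    rw [swap_int (f := fun r s => (x - r) * (rho s * uxx r (t n + s)))]
    · refine intervalIntegral.integral_congr fun s _ => ?_
      have := h.taylor x (t n + s)
      rw [show (fun r => (x - r) * (rho s * uxx r (t n + s))) =
        fun r => rho s * ((x - r) * uxx r (t n + s)) from funext fun r => by ring,
        intervalIntegral.integral_const_mul, ← this]
      ring
    · exact (by fun_prop : Continuous fun p : ℝ × ℝ => x - p.1).mul
        ((c_rho.comp continuous_snd).mul (c2 h.cuxx continuous_fst (by fun_prop)))
  -- convergence of the slopes
  set I : ℝ → ℝ := fun x => ∫ r in (0:ℝ)..x, (x - r) * deriv W (v r) with hI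
  have hD : Tendsto (fun n => ∫ s in (0:ℝ)..1, rho s * ux 0 (t n + s)) atTop
      (𝓝 (v 1 - v 0 - I 1)) := by
    refine (((hA 1).sub (hA 0)).sub (hlim 1)).congr fun n => ?_
    rw [← hid 1 n]; ring
  have hform : ∀ x, v x = v 0 + (v 1 - v 0 - I 1) * x + I x := by
    intro x
    have l1 := ((hA x).sub (hA 0)).sub (hD.const_mul x)
    have l2 := tendsto_nhds_unique (l1.congr fun n => hid x n) (hlim x)
    simp only [hI] at l2 ⊢
    linarith
  have hcg : Continuous (fun r => deriv W (v r)) := hcW.comp hcv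
  have hcg2 : Continuous (fun r => r * deriv W (v r)) := continuous_id.mul hcg
  have hIeq : ∀ x, I x = x * (∫ r in (0:ℝ)..x, deriv W (v r)) - ∫ r in (0:ℝ)..x, r * deriv W (v r) := by
    intro x
    rw [← intervalIntegral.integral_const_mul, ← intervalIntegral.integral_sub]
    · simp only [hI]
      exact intervalIntegral.integral_congr fun r _ => by ring
    · exact (continuous_const.mul hcg).intervalIntegrable _ _
    · exact hcg2.intervalIntegrable _ _
  have hP : ∀ {g : ℝ → ℝ}, Continuous g → ∀ x, HasDerivAt (fun x => ∫ r in (0:ℝ)..x, g r) (g x) x :=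
    fun hg x => intervalIntegral.integral_hasDerivAt_right (hg.intervalIntegrable _ _)
      (hg.stronglyMeasurableAtFilter _ _) hg.continuousAt
  have d1 : ∀ x, HasDerivAt v ((v 1 - v 0 - I 1) + ∫ r in (0:ℝ)..x, deriv W (v r)) x := by
    intro x
    have e : v = fun x => v 0 + (v 1 - v 0 - I 1) * x +
        (x * (∫ r in (0:ℝ)..x, deriv W (v r)) - ∫ r in (0:ℝ)..x, r * deriv W (v r)) := by
      funext x
      rw [← hIeq]
      exact hform x
    have := (((hasDerivAt_id x).const_mul (v 1 - v 0 - I 1)).const_add (v 0)).add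
      (((hasDerivAt_id x).mul (hP hcg x)).sub (hP hcg2 x))
    refine (this.congr_deriv ?_).congr_of_eventuallyEq (Eventually.of_forall fun y => ?_)
    · simp only [id]; ring
    · exact congrFun e y
  refine ⟨_, ⟨d1, fun x => (hP hcg x).const_add _, hbd⟩, fun x => ?_⟩
  have := (d1 x).le_of_lipschitz hlip
  rwa [Real.coe_toNNReal _ hK0] at this

end limits

section energy

variable {K : ℝ} {u ux uy uxx uxy uyy : ℝ → ℝ → ℝ} {t : ℕ → ℝ}

/-- Hamiltonian density. -/
noncomputable def hd (W : ℝ → ℝ) (u ux uy : ℝ → ℝ → ℝ) (x y : ℝ) : ℝ :=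
  (ux x y) ^ 2 / 2 - x ^ 2 * (uy x y) ^ 2 / 2 + W (u x y)

theorem Dat.c_hd (h : Dat W K u ux uy uxx uxy uyy) (hW : DoubleWell W) :
    Continuous (fun p : ℝ × ℝ => hd W u ux uy p.1 p.2) := by
  have h1 := h.cu
  have h2 := h.cux
  have h3 := h.cuy
  have h4 := hW.1.continuous
  unfold hd
  fun_prop

theorem Dat.flux (h : Dat W K u ux uy uxx uxy uyy) (a : ℝ) {y z : ℝ} (hyz : y ≤ z) :
    |∫ r in y..z, ux a r * uy a r| ≤ 2 * K := by
  have hK0 : 0 ≤ K := (abs_nonneg _).trans (h.bx 0 0)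
  have c1 : Continuous (fun r => uy a r) := c2 h.cuy continuous_const continuous_id
  have e := intervalIntegral.integral_eq_sub_of_hasDerivAt (fun r _ => h.dy a r)
    (c1.intervalIntegrable y z)
  have l := intervalIntegral.norm_integral_le_of_norm_le (f := fun r => ux a r * uy a r)
    (g := fun r => K * uy a r) (μ := volume) hyz
    (Eventually.of_forall fun r _ => by
      rw [norm_mul, Real.norm_of_nonneg (h.pos a r).le]
      exact mul_le_mul_of_nonneg_right (h.bx a r) (h.pos a r).le)
    ((continuous_const.mul c1).intervalIntegrable _ _)
  rw [intervalIntegral.integral_const_mul, e, Real.norm_eq_abs] at l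
  have b1 := abs_le.1 (h.bd a y)
  have b2 := abs_le.1 (h.bd a z)
  nlinarith

/-- The Hamiltonian identity: the sliced Hamiltonian has bounded oscillation. -/
theorem Dat.ham (h : Dat W K u ux uy uxx uxy uyy) (hW : DoubleWell W) (a y z : ℝ) :
    |(∫ x in (-a)..a, hd W u ux uy x z) - ∫ x in (-a)..a, hd W u ux uy x y| ≤ 4 * K := by
  wlog hyz : y ≤ z generalizing y z
  · rw [abs_sub_comm]; exact this z y (not_le.1 hyz).le
  have cF : Continuous (fun p : ℝ × ℝ => uxx p.1 p.2 * uy p.1 p.2 + ux p.1 p.2 * uxy p.1 p.2) := by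
    have h1 := h.cuxx
    have h2 := h.cux
    have h3 := h.cuy
    have h4 := h.cuxy
    fun_prop
  have cc : ∀ y, Continuous (fun x => hd W u ux uy x y) := fun y =>
    c2 (h.c_hd hW) continuous_id continuous_const
  have hy : ∀ x r, HasDerivAt (fun r => hd W u ux uy x r)
      (uxx x r * uy x r + ux x r * uxy x r) r := by
    intro x r
    have e1 := ((h.dxy x r).pow 2).div_const 2
    have e2 := (((h.dyy x r).pow 2).const_mul (x ^ 2)).div_const 2
    have e3 := (dw_hasDeriv hW (u x r)).comp r (h.dy x r)
    refine ((e1.sub e2).add e3).congr_deriv ?_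
    rw [← h.pde]
    push_cast
    ring
  have e1 : ∀ x, hd W u ux uy x z - hd W u ux uy x y =
      ∫ r in y..z, (uxx x r * uy x r + ux x r * uxy x r) := fun x =>
    (intervalIntegral.integral_eq_sub_of_hasDerivAt (fun r _ => hy x r)
      ((c2 (f := fun x r => uxx x r * uy x r + ux x r * uxy x r) cF continuous_const
        continuous_id).intervalIntegrable _ _)).symm
  have e2 : ∀ r, ∫ x in (-a)..a, (uxx x r * uy x r + ux x r * uxy x r) =
      ux a r * uy a r - ux (-a) r * uy (-a) r := fun r =>
    intervalIntegral.integral_eq_sub_of_hasDerivAt (fun x _ => (h.dxx x r).mul (h.dyx x r))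
      ((c2 (f := fun x r => uxx x r * uy x r + ux x r * uxy x r) cF continuous_id
        continuous_const).intervalIntegrable _ _)
  rw [← intervalIntegral.integral_sub ((cc z).intervalIntegrable _ _)
    ((cc y).intervalIntegrable _ _)]
  simp only [e1]
  rw [swap_int (f := fun x r => uxx x r * uy x r + ux x r * uxy x r) cF]
  simp only [e2]
  have ci : ∀ a, IntervalIntegrable (fun r => ux a r * uy a r) volume y z := fun a =>
    ((c2 h.cux continuous_const continuous_id).mul
      (c2 h.cuy continuous_const continuous_id)).intervalIntegrable _ _
  rw [intervalIntegral.integral_sub (ci a) (ci (-a))]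
  have f1 := abs_le.1 (h.flux a hyz)
  have f2 := abs_le.1 (h.flux (-a) hyz)
  rw [abs_le]
  constructor <;> linarith

/-- the upper density after integration by parts. -/
noncomputable def qd (W : ℝ → ℝ) (u uy uyy : ℝ → ℝ → ℝ) (x y : ℝ) : ℝ :=
  (W (u x y) - u x y * deriv W (u x y) / 2) +
    x ^ 2 / 4 * (2 * (uy x y * uy x y + u x y * uyy x y))

theorem Dat.c_qd (h : Dat W K u ux uy uxx uxy uyy) (hW : DoubleWell W) :
    Continuous (fun p : ℝ × ℝ => qd W u uy uyy p.1 p.2) := by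
  have h1 := h.cu
  have h2 := h.cuyy
  have h3 := h.cuy
  have h4 := hW.1.continuous
  have h5 := dw_contDeriv hW
  unfold qd
  fun_prop

theorem Dat.upper (h : Dat W K u ux uy uxx uxy uyy) (hW : DoubleWell W) {a : ℝ} (ha : 0 < a)
    (y : ℝ) :
    ∫ x in (-a)..a, hd W u ux uy x y ≤ K + ∫ x in (-a)..a, qd W u uy uyy x y := by
  have c1 : Continuous (fun x => ux x y * ux x y + u x y * uxx x y) := by
    have h1 : Continuous (fun x => ux x y) := c2 h.cux continuous_id continuous_const
    have h2 : Continuous (fun x => u x y) := c2 h.cu continuous_id continuous_const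
    have h3 : Continuous (fun x => uxx x y) := c2 h.cuxx continuous_id continuous_const
    fun_prop
  have c3 : Continuous (fun x => qd W u uy uyy x y) := c2 (h.c_qd hW) continuous_id continuous_const
  have e1 := intervalIntegral.integral_eq_sub_of_hasDerivAt (a := -a) (b := a)
    (fun x _ => (h.dx x y).mul (h.dxx x y)) (c1.intervalIntegrable _ _)
  simp only [Pi.mul_apply] at e1
  have e2 : ∫ x in (-a)..a, hd W u ux uy x y ≤
      ∫ x in (-a)..a, ((ux x y * ux x y + u x y * uxx x y) / 2 + qd W u uy uyy x y) := by
    apply intervalIntegral.integral_mono_on (by linarith)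
    · exact (c2 (h.c_hd hW) continuous_id continuous_const).intervalIntegrable _ _
    · exact ((c1.div_const 2).add c3).intervalIntegrable _ _
    · intro x _
      simp only [hd, qd]
      rw [← h.pde]
      nlinarith [sq_nonneg (x * uy x y)]
  rw [intervalIntegral.integral_add ((c1.div_const 2).intervalIntegrable _ _)
    (c3.intervalIntegrable _ _), intervalIntegral.integral_div, e1] at e2
  have hb : ∀ x, |u x y * ux x y| ≤ K := by
    intro x
    rw [abs_mul]
    calc _ ≤ 1 * K := mul_le_mul (h.bd x y) (h.bx x y) (abs_nonneg _) zero_le_one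
      _ = K := one_mul _
  have b1 := abs_le.1 (hb a)
  have b2 := abs_le.1 (hb (-a))
  linarith

theorem Dat.avg_qd (h : Dat W K u ux uy uxx uxy uyy) (hW : DoubleWell W) (x y : ℝ) :
    ∫ s in (0:ℝ)..1, rho s * qd W u uy uyy x (y + s) =
      1 * (∫ s in (0:ℝ)..1, rho s * (fun r => W r - r * deriv W r / 2) (u x (y + s))) +
        x ^ 2 / 4 * ∫ s in (0:ℝ)..1, rho2 s * (fun r => r * r) (u x (y + s)) := by
  have hc1 : Continuous (fun s => uyy x (y + s)) := c2 h.cuyy continuous_const (by fun_prop)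
  have hc2 : Continuous (fun s => uy x (y + s)) := c2 h.cuy continuous_const (by fun_prop)
  have hc3 : Continuous (fun s => u x (y + s)) := c2 h.cu continuous_const (by fun_prop)
  have hcW := dw_contDeriv hW
  have hcW0 := hW.1.continuous
  have d1 : ∀ s, HasDerivAt (fun s => u x (y + s)) (uy x (y + s)) s :=
    fun s => (h.dy x (y + s)).comp_const_add y s
  have d2 : ∀ s, HasDerivAt (fun s => uy x (y + s)) (uyy x (y + s)) s :=
    fun s => (h.dyy x (y + s)).comp_const_add y s
  have cq : Continuous
      (fun s => 2 * (uy x (y + s) * uy x (y + s) + u x (y + s) * uyy x (y + s))) :=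
    continuous_const.mul ((hc2.mul hc2).add (hc3.mul hc1))
  have e := ibp_rho (f := fun s => u x (y + s) * u x (y + s))
    (f' := fun s => 2 * (u x (y + s) * uy x (y + s)))
    (f'' := fun s => 2 * (uy x (y + s) * uy x (y + s) + u x (y + s) * uyy x (y + s)))
    (fun s => ((d1 s).mul (d1 s)).congr_deriv (by ring))
    (fun s => ((d1 s).mul (d2 s)).const_mul 2) cq
  simp only [one_mul]
  have cr := c_rho
  rw [← e, ← intervalIntegral.integral_const_mul, ← intervalIntegral.integral_add]
  · refine intervalIntegral.integral_congr fun s _ => ?_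
    simp only [qd]
    ring
  · exact (c_rho.mul ((hcW0.comp hc3).sub
      ((hc3.mul (hcW.comp hc3)).div_const 2))).intervalIntegrable _ _
  · exact (continuous_const.mul (c_rho.mul cq)).intervalIntegrable _ _

theorem Dat.slice (h : Dat W K u ux uy uxx uxy uyy) (hW : DoubleWell W)
    (hv : ∀ x s, Tendsto (fun n => u x (t n + s)) atTop (𝓝 (v x))) {a : ℝ} (ha : 0 < a) (y : ℝ) :
    ∫ x in (-a)..a, hd W u ux uy x y ≤
      5 * K + ∫ x in (-a)..a, (W (v x) - v x * deriv W (v x) / 2) := by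
  have hcW := dw_contDeriv hW
  have hcW0 := hW.1.continuous
  have cr := c_rho
  have cr2 := c_rho2
  have hcu := h.cu
  have l1 := h.lim2 hv c_rho (G := fun r => W r - r * deriv W r / 2) (by fun_prop)
    (c := fun _ => 1) continuous_const (-a) a
  have l2 := h.lim2 hv c_rho2 (G := fun r => r * r) (by fun_prop)
    (c := fun x => x ^ 2 / 4) (by fun_prop) (-a) a
  have l3 := (l1.add l2).const_add (5 * K)
  simp only [int_rho, int_rho2, one_mul, zero_mul, mul_zero, intervalIntegral.integral_zero,
      add_zero] at l3
  refine ge_of_tendsto l3 (Eventually.of_forall fun n => ?_)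
  have c1 : Continuous (fun p : ℝ × ℝ => rho p.1 * qd W u uy uyy p.2 (t n + p.1)) :=
    (c_rho.comp continuous_fst).mul (c2 (h.c_qd hW) continuous_snd (by fun_prop))
  have key : ∫ s in (0:ℝ)..1, rho s * (∫ x in (-a)..a, hd W u ux uy x y) ≤
      ∫ s in (0:ℝ)..1, (rho s * (5 * K) + ∫ x in (-a)..a, rho s * qd W u uy uyy x (t n + s)) := by
    apply intervalIntegral.integral_mono_on zero_le_one
    · apply Continuous.intervalIntegrable; fun_prop
    · refine Continuous.intervalIntegrable (Continuous.add (by fun_prop) ?_) _ _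
      exact intervalIntegral.continuous_parametric_intervalIntegral_of_continuous'
        (f := fun s x => rho s * qd W u uy uyy x (t n + s)) c1 _ _
    · intro s _
      rw [intervalIntegral.integral_const_mul, ← mul_add]
      refine mul_le_mul_of_nonneg_left ?_ (rho_nonneg s)
      have f1 := abs_le.1 (h.ham hW a y (t n + s))
      have f2 := h.upper hW ha (t n + s)
      linarith
  rw [intervalIntegral.integral_mul_const, int_rho, one_mul, intervalIntegral.integral_add,
    intervalIntegral.integral_mul_const, int_rho, one_mul,
    swap_int (f := fun s x => rho s * qd W u uy uyy x (t n + s)) c1] at key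
  · refine key.trans (le_of_eq ?_)
    congr 1
    rw [← intervalIntegral.integral_add]
    · refine intervalIntegral.integral_congr fun x _ => ?_
      have := h.avg_qd hW x (t n)
      simpa only [one_mul] using this
    · refine Continuous.intervalIntegrable
        (intervalIntegral.continuous_parametric_intervalIntegral_of_continuous' ?_ 0 1) _ _
      have : Continuous (fun p : ℝ × ℝ => u p.1 (t n + p.2)) :=
        c2 h.cu continuous_fst (by fun_prop)
      simp only [Function.uncurry_def]
      fun_prop
    · refine Continuous.intervalIntegrable (Continuous.mul (by fun_prop)
        (intervalIntegral.continuous_parametric_intervalIntegral_of_continuous' ?_ 0 1)) _ _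
      have : Continuous (fun p : ℝ × ℝ => u p.1 (t n + p.2)) :=
        c2 h.cu continuous_fst (by fun_prop)
      simp only [Function.uncurry_def]
      fun_prop
  · apply Continuous.intervalIntegrable; fun_prop
  · refine Continuous.intervalIntegrable ?_ _ _
    exact intervalIntegral.continuous_parametric_intervalIntegral_of_continuous'
        (f := fun s x => rho s * qd W u uy uyy x (t n + s)) c1 _ _

theorem Dat.slice_bound (h : Dat W K u ux uy uxx uxy uyy) (hW : DoubleWell W) {a : ℝ} (ha : 0 < a)
    (y : ℝ) : ∫ x in (-a)..a, hd W u ux uy x y ≤ 8 * K := by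
  have hmono : ∀ x, StrictMono (fun y => u x y) := fun x =>
    strictMono_of_deriv_pos fun y => by rw [(h.dy x y).deriv]; exact h.pos x y
  have hba : ∀ x, BddAbove (range (fun y => u x y)) := fun x =>
    ⟨1, by rintro _ ⟨y, rfl⟩; exact (abs_le.1 (h.bd x y)).2⟩
  have hbb : ∀ x, BddBelow (range (fun y => u x y)) := fun x =>
    ⟨-1, by rintro _ ⟨y, rfl⟩; exact (abs_le.1 (h.bd x y)).1⟩
  have hw : ∀ x s, Tendsto (fun n : ℕ => u x ((n:ℝ) + s)) atTop (𝓝 (⨆ y, u x y)) := fun x s =>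
    (tendsto_atTop_ciSup (hmono x).monotone (hba x)).comp
      (tendsto_atTop_add_const_right _ _ tendsto_natCast_atTop_atTop)
  have hv : ∀ x s, Tendsto (fun n : ℕ => u x (-(n:ℝ) + s)) atTop (𝓝 (⨅ y, u x y)) := fun x s =>
    (tendsto_atBot_ciInf (hmono x).monotone (hbb x)).comp
      (tendsto_atBot_add_const_right _ _
        (tendsto_neg_atTop_atBot.comp tendsto_natCast_atTop_atTop))
  obtain ⟨w', hws, hwK⟩ := h.sol hW hw
  obtain ⟨v', hvs, hvK⟩ := h.sol hW hv
  have hlt : ∀ x, (⨅ y, u x y) < ⨆ y, u x y := fun x =>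
    ((ciInf_le (hbb x) 0).trans_lt (hmono x zero_lt_one)).trans_le (le_ciSup (hba x) 1)
  rcases hvs.one_good hW hws hlt with hc | hc
  · have e1 := h.slice hW hv ha y
    have e2 := hvs.energy hW hvK hc ha
    linarith
  · have e1 := h.slice hW hw ha y
    have e2 := hws.energy hW hwK hc ha
    linarith

/-- energy density in coordinates -/
noncomputable def ed (W : ℝ → ℝ) (u ux uy : ℝ → ℝ → ℝ) (x y : ℝ) : ℝ :=
  ((ux x y) ^ 2 + x ^ 2 * (uy x y) ^ 2) / 2 + W (u x y)

theorem Dat.rect (h : Dat W K u ux uy uxx uxy uyy) (hW : DoubleWell W) {R : ℝ} (hR : 0 < R) :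
    ∫ x in (-R)..R, ∫ y in (-R ^ 2)..(R ^ 2), ed W u ux uy x y ≤ 20 * K * R ^ 2 := by
  have hK0 : 0 ≤ K := (abs_nonneg _).trans (h.bx 0 0)
  have hR2 : -R ^ 2 ≤ R ^ 2 := by nlinarith
  have ch := h.c_hd hW
  have cuy := h.cuy
  have cg : Continuous (fun p : ℝ × ℝ => K * R * uy p.1 p.2) := by fun_prop
  have ce : Continuous (fun p : ℝ × ℝ => ed W u ux uy p.1 p.2) := by
    have h1 := h.cu
    have h2 := h.cux
    have h4 := hW.1.continuous
    unfold ed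
    fun_prop
  have hle : ∀ x ∈ Icc (-R) R, ∀ y, ed W u ux uy x y ≤ hd W u ux uy x y + K * R * uy x y := by
    intro x hx y
    have h1 : x ^ 2 * uy x y ^ 2 ≤ K * R * uy x y := by
      have e1 := h.bxy x y
      have e2 : |x| ≤ R := abs_le.2 hx
      have e3 := h.pos x y
      calc x ^ 2 * uy x y ^ 2 = |x * uy x y| * (|x| * uy x y) := by
            rw [abs_mul, abs_of_pos e3, ← sq_abs x]; ring
        _ ≤ K * (R * uy x y) := by
            apply mul_le_mul e1 (mul_le_mul_of_nonneg_right e2 e3.le) (by positivity) hK0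
        _ = _ := by ring
    simp only [ed, hd]
    linarith
  have s1 : ∀ {f : ℝ → ℝ → ℝ}, Continuous (fun p : ℝ × ℝ => f p.1 p.2) → ∀ x a b,
      IntervalIntegrable (fun y => f x y) volume a b := fun hf x a b =>
    (c2 hf continuous_const continuous_id).intervalIntegrable _ _
  have s2 : ∀ {f : ℝ → ℝ → ℝ}, Continuous (fun p : ℝ × ℝ => f p.1 p.2) → ∀ c d a b,
      IntervalIntegrable (fun x => ∫ y in c..d, f x y) volume a b := fun hf c d a b =>
    (intervalIntegral.continuous_parametric_intervalIntegral_of_continuous' hf c d).intervalIntegrable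
      _ _
  calc _ ≤ ∫ x in (-R)..R, ((∫ y in (-R ^ 2)..(R ^ 2), hd W u ux uy x y) +
          ∫ y in (-R ^ 2)..(R ^ 2), K * R * uy x y) := by
        apply intervalIntegral.integral_mono_on (by linarith) (s2 ce _ _ _ _)
          ((s2 ch _ _ _ _).add (s2 (f := fun x y => K * R * uy x y) cg _ _ _ _))
        intro x hx
        rw [← intervalIntegral.integral_add (s1 ch x _ _)
          (s1 (f := fun x y => K * R * uy x y) cg x _ _)]
        apply intervalIntegral.integral_mono_on hR2 (s1 ce x _ _)
          ((s1 ch x _ _).add (s1 (f := fun x y => K * R * uy x y) cg x _ _))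
        intro y _
        exact hle x hx y
    _ = (∫ y in (-R ^ 2)..(R ^ 2), ∫ x in (-R)..R, hd W u ux uy x y) +
          ∫ x in (-R)..R, ∫ y in (-R ^ 2)..(R ^ 2), K * R * uy x y := by
        rw [intervalIntegral.integral_add (s2 ch _ _ _ _)
          (s2 (f := fun x y => K * R * uy x y) cg _ _ _ _), swap_int ch]
    _ ≤ (∫ y in (-R ^ 2)..(R ^ 2), 8 * K) + ∫ x in (-R)..R, K * R * 2 := by
        apply add_le_add
        · apply intervalIntegral.integral_mono_on hR2 _ _ (fun y _ => h.slice_bound hW hR y)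
          · exact s2 (f := fun y x => hd W u ux uy x y) (c2 ch continuous_snd continuous_fst) _ _ _ _
          · exact continuous_const.intervalIntegrable _ _
        · apply intervalIntegral.integral_mono_on (by linarith)
            (s2 (f := fun x y => K * R * uy x y) cg _ _ _ _)
            (continuous_const.intervalIntegrable _ _)
          intro x _
          rw [intervalIntegral.integral_const_mul,
            intervalIntegral.integral_eq_sub_of_hasDerivAt (fun r _ => h.dy x r) (s1 h.cuy x _ _)]
          have b1 := abs_le.1 (h.bd x (R ^ 2))
          have b2 := abs_le.1 (h.bd x (-R ^ 2))
          exact mul_le_mul_of_nonneg_left (by linarith) (by positivity)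
    _ = 20 * K * R ^ 2 := by
        simp only [intervalIntegral.integral_const, smul_eq_mul]
        ring

end energy

theorem hd_fst {G : ℝ × ℝ → ℝ} (hG : Differentiable ℝ G) (x y : ℝ) :
    HasDerivAt (fun r => G (r, y)) (fderiv ℝ G (x, y) (1, 0)) x :=
  (hG (x, y)).hasFDerivAt.comp_hasDerivAt x ((hasDerivAt_id x).prodMk (hasDerivAt_const x y))

theorem hd_snd {G : ℝ × ℝ → ℝ} (hG : Differentiable ℝ G) (x y : ℝ) :
    HasDerivAt (fun r => G (x, r)) (fderiv ℝ G (x, y) (0, 1)) y :=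
  (hG (x, y)).hasFDerivAt.comp_hasDerivAt y ((hasDerivAt_const y x).prodMk (hasDerivAt_id y))

theorem sq_bound {A B K : ℝ} (h : Real.sqrt (A ^ 2 + B ^ 2) ≤ K) : |A| ≤ K ∧ |B| ≤ K := by
  constructor
  · rw [← Real.sqrt_sq_eq_abs]
    exact (Real.sqrt_le_sqrt (by nlinarith [sq_nonneg B])).trans h
  · rw [← Real.sqrt_sq_eq_abs]
    exact (Real.sqrt_le_sqrt (by nlinarith [sq_nonneg A])).trans h

theorem exists_dat {K : ℝ} {u : ℝ × ℝ → ℝ} (hu : ContDiff ℝ 2 u)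
    (h1 : ∀ p : ℝ × ℝ, u p ∈ Set.Icc (-1 : ℝ) 1)
    (h2 : ∀ p : ℝ × ℝ, Real.sqrt (grushinGradSq u p) ≤ K)
    (h3 : ∀ p : ℝ × ℝ, grushinLap u p = deriv W (u p))
    (h4 : ∀ p : ℝ × ℝ, 0 < pY u p) :
    ∃ uxx uxy uyy, Dat W K (fun x y => u (x, y)) (fun x y => pX u (x, y)) (fun x y => pY u (x, y))
      uxx uxy uyy := by
  have du : Differentiable ℝ u := hu.differentiable (by norm_num)
  have hf : ContDiff ℝ 1 (fderiv ℝ u) := hu.fderiv_right (by norm_num)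
  have hF : ∀ e, ContDiff ℝ 1 (fun p => fderiv ℝ u p e) := fun e => hf.clm_apply contDiff_const
  have dF : ∀ e, Differentiable ℝ (fun p => fderiv ℝ u p e) :=
    fun e => (hF e).differentiable (by norm_num)
  have cF : ∀ e e', Continuous (fun p => fderiv ℝ (fun p => fderiv ℝ u p e) p e') :=
    fun e e' => ((hF e).continuous_fderiv (by norm_num)).clm_apply continuous_const
  have eX : pX u = fun p => fderiv ℝ u p (1, 0) := funext fun p => (hd_fst du p.1 p.2).deriv
  have eY : pY u = fun p => fderiv ℝ u p (0, 1) := funext fun p => (hd_snd du p.1 p.2).deriv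
  have symm : ∀ p, fderiv ℝ (fun p => fderiv ℝ u p (1, 0)) p (0, 1) =
      fderiv ℝ (fun p => fderiv ℝ u p (0, 1)) p (1, 0) := by
    intro p
    have hs := second_derivative_symmetric (fun y => (du y).hasFDerivAt)
      ((hf.differentiable (by norm_num)) p).hasFDerivAt (0, 1) (1, 0)
    have e : ∀ e e', fderiv ℝ (fun p => fderiv ℝ u p e) p e' =
        fderiv ℝ (fderiv ℝ u) p e' e := by
      intro e e'
      rw [fderiv_clm_apply ((hf.differentiable (by norm_num)) p) (differentiableAt_const e)]
      simp
    rw [e, e, hs]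
  refine ⟨fun x y => fderiv ℝ (fun p => fderiv ℝ u p (1, 0)) (x, y) (1, 0),
    fun x y => fderiv ℝ (fun p => fderiv ℝ u p (1, 0)) (x, y) (0, 1),
    fun x y => fderiv ℝ (fun p => fderiv ℝ u p (0, 1)) (x, y) (0, 1), ?_⟩
  have hb : ∀ x y, |pX u (x, y)| ≤ K ∧ |x * pY u (x, y)| ≤ K := by
    intro x y
    apply sq_bound
    have := h2 (x, y)
    simp only [grushinGradSq] at this
    rwa [mul_pow]
  constructor
  · exact hu.continuous
  · rw [eX]; exact (hF (1, 0)).continuous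
  · rw [eY]; exact (hF (0, 1)).continuous
  · exact cF _ _
  · exact cF _ _
  · exact cF _ _
  · rw [eX]; exact hd_fst du
  · rw [eY]; exact hd_snd du
  · rw [eX]; exact hd_fst (dF _)
  · rw [eX]; exact hd_snd (dF _)
  · rw [eY]; intro x y; rw [symm]; exact hd_fst (dF _) x y
  · rw [eY]; exact hd_snd (dF _)
  · exact fun x y => abs_le.2 (h1 _)
  · exact fun x y => (hb x y).1
  · exact fun x y => (hb x y).2
  · intro x y
    have := h3 (x, y)
    simp only [grushinLap, pXX, pYY] at this
    rw [← this]
    congr 1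
    · have e : deriv (fun x => u (x, y)) = fun r => fderiv ℝ u (r, y) (1, 0) :=
        funext fun r => (hd_fst du r y).deriv
      rw [e, (hd_fst (dF (1, 0)) x y).deriv]
    · have e : deriv (fun y => u (x, y)) = fun r => fderiv ℝ u (x, r) (0, 1) :=
        funext fun r => (hd_snd du x r).deriv
      rw [e, (hd_snd (dF (0, 1)) x y).deriv]
  · exact fun x y => h4 _

theorem ball_sub {R : ℝ} (hR : 0 < R) :
    gBall 0 R ⊆ Icc (-R) R ×ˢ Icc (-R ^ 2) (R ^ 2) := by
  intro p hp
  have hp' : (p.1 ^ 4 + 4 * p.2 ^ 2) ^ ((1 : ℝ) / 4) < R := by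
    simpa [gBall, gNorm] using hp
  have h0 : 0 ≤ p.1 ^ 4 + 4 * p.2 ^ 2 := by positivity
  have h1 : p.1 ^ 4 + 4 * p.2 ^ 2 < R ^ 4 := by
    have := pow_lt_pow_left₀ hp' (Real.rpow_nonneg h0 _) (n := 4) (by norm_num)
    rwa [← Real.rpow_natCast, ← Real.rpow_mul h0, show ((1:ℝ) / 4 * ((4:ℕ):ℝ)) = 1 by norm_num,
      Real.rpow_one] at this
  have h2 : p.1 ^ 2 ≤ R ^ 2 := by
    apply le_of_sq_le_sq _ (sq_nonneg R) 
    nlinarith [sq_nonneg p.2]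
  have h3 : |p.1| ≤ R := abs_le_of_sq_le_sq h2 hR.le
  have h4 : |p.2| ≤ R ^ 2 := by
    apply abs_le_of_sq_le_sq _ (sq_nonneg R)
    nlinarith [sq_nonneg (p.1 ^ 2), sq_nonneg p.2]
  refine ⟨abs_le.1 h3, ?_⟩
  have := abs_le.1 h4
  exact ⟨by linarith [this.1], this.2⟩

end GEE

/-- energy estimate. If `u ∈ C²(ℝ², [−1,1])`, with `|∇_G u| ≤ K`
everywhere, solves `Δ_G u = W'(u)` in `ℝ²` and `∂_y u > 0`, then there is a constant
`C > 0` depending only on `W` and `K` such that, for every `R > 0`,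
`∫_{B_R(0)} (|∇_G u|²/2 + W(u)) ≤ C R²` and consequently
`∫_{B_R(0)} x² |∇_G u|² ≤ 2 C R⁴`. -/
theorem monotone_energy_estimate (W : ℝ → ℝ) (hW : DoubleWell W) (K : ℝ) :
    ∃ C > (0 : ℝ), ∀ u : ℝ × ℝ → ℝ, ContDiff ℝ 2 u →
      (∀ p : ℝ × ℝ, u p ∈ Set.Icc (-1 : ℝ) 1) →
      (∀ p : ℝ × ℝ, Real.sqrt (grushinGradSq u p) ≤ K) →
      (∀ p : ℝ × ℝ, grushinLap u p = deriv W (u p)) →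
      (∀ p : ℝ × ℝ, 0 < pY u p) →
      ∀ R : ℝ, 0 < R →
        (∫ p in gBall 0 R, (grushinGradSq u p / 2 + W (u p))) ≤ C * R ^ 2 ∧
        (∫ p in gBall 0 R, p.1 ^ 2 * grushinGradSq u p) ≤ 2 * C * R ^ 4 := by

  refine ⟨20 * |K| + 1, by positivity, ?_⟩
  intro u hu h1 h2 h3 h4 R hR
  obtain ⟨uxx, uxy, uyy, h⟩ := GEE.exists_dat hu h1 h2 h3 h4
  have hK0 : 0 ≤ K := (abs_nonneg _).trans (h.bx 0 0)
  have hrect := h.rect hW hR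
  have hsub := GEE.ball_sub hR
  set Q : Set (ℝ × ℝ) := Set.Icc (-R) R ×ˢ Set.Icc (-R ^ 2) (R ^ 2) with hQ
  have hQc : IsCompact Q := isCompact_Icc.prod isCompact_Icc
  have cX : Continuous (pX u) := h.cux
  have cY : Continuous (pY u) := h.cuy
  have cg : Continuous (grushinGradSq u) := by
    unfold grushinGradSq
    fun_prop
  have cu : Continuous u := hu.continuous
  have cW := hW.1.continuous
  have hg0 : ∀ p, 0 ≤ grushinGradSq u p := fun p => by unfold grushinGradSq; positivity
  have ce : Continuous (fun p => grushinGradSq u p / 2 + W (u p)) := by fun_prop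
  have cx : Continuous (fun p : ℝ × ℝ => p.1 ^ 2 * grushinGradSq u p) := by fun_prop
  have ie : IntegrableOn (fun p => grushinGradSq u p / 2 + W (u p)) Q volume :=
    ce.continuousOn.integrableOn_compact hQc
  have ix : IntegrableOn (fun p : ℝ × ℝ => p.1 ^ 2 * grushinGradSq u p) Q volume :=
    cx.continuousOn.integrableOn_compact hQc
  have eQ : ∫ p in Q, (grushinGradSq u p / 2 + W (u p)) ≤ 20 * K * R ^ 2 := by
    rw [hQ, Measure.volume_eq_prod, setIntegral_prod _ (by rw [← Measure.volume_eq_prod]; exact ie)]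
    simp only [integral_Icc_eq_integral_Ioc]
    rw [intervalIntegral.integral_of_le (by linarith)] at hrect
    refine le_trans (le_of_eq ?_) hrect
    congr 1
    funext x
    rw [intervalIntegral.integral_of_le (by nlinarith)]
    rfl
  have hfin : 20 * K * R ^ 2 ≤ (20 * |K| + 1) * R ^ 2 := by
    rw [abs_of_nonneg hK0]
    nlinarith [sq_nonneg R]
  constructor
  · refine le_trans ?_ (eQ.trans hfin)
    exact setIntegral_mono_set ie (Filter.Eventually.of_forall fun p =>
      add_nonneg (div_nonneg (hg0 p) two_pos.le) (hW.2.2.2.2.1 _)) hsub.eventuallyLE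
  · calc _ ≤ ∫ p in Q, p.1 ^ 2 * grushinGradSq u p :=
          setIntegral_mono_set ix (Filter.Eventually.of_forall fun p =>
            mul_nonneg (sq_nonneg _) (hg0 p)) hsub.eventuallyLE
      _ ≤ ∫ p in Q, 2 * R ^ 2 * (grushinGradSq u p / 2 + W (u p)) := by
          apply setIntegral_mono_on ix (ie.const_mul _) hQc.measurableSet
          intro p hp
          have e1 : p.1 ^ 2 ≤ R ^ 2 := sq_le_sq' hp.1.1 hp.1.2
          have e2 := hg0 p
          have e3 := hW.2.2.2.2.1 (u p)
          nlinarith [mul_le_mul_of_nonneg_right e1 e2, mul_nonneg (sq_nonneg R) e3]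
      _ = 2 * R ^ 2 * ∫ p in Q, (grushinGradSq u p / 2 + W (u p)) := integral_const_mul _ _
      _ ≤ 2 * R ^ 2 * ((20 * |K| + 1) * R ^ 2) :=
          mul_le_mul_of_nonneg_left (eQ.trans hfin) (by positivity)
      _ = _ := by ring
end
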